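/- Fix an integer n ≥ 1 and assume the Riemann Hypothesis. With c = 1 + 1/log(2πY) and V = 2πY, as Y → ∞: (1/2π) ∫_{−V}^{V} (ζ'/ζ)^{(n)}(c + it) · ζ(c + it) · Y^{c+it}/(c + it) dt = M_n(Y) + O(Y^{1/2} log^{n+5/2} Y), where M_n(Y) = (−1)^{n+1} (1/(n+1)) Y log^{n+1} Y + (−1)^{n+1} ∑_{k=0}^{n} binom(n,k) (−1)^k k! (−1 + ∑_{j=0}^{k} (−1)^j C_j) Y log^{n−k} Y + n! A_n Y. -/

import Mathlib

open Complex Finset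

/-- The vertical line integral
`(1/2πi) ∫_{c-iV}^{c+iV} (ζ'/ζ)^{(n)}(s) ζ(s) Y^s / s ds`, written as a real
integral in `t`. -/
noncomputable def perronIntegral (n : ℕ) (c V Y : ℝ) : ℂ :=
  ((1 / (2 * Real.pi) : ℝ) : ℂ) *
    ∫ t in -V..V,
      iteratedDeriv n (fun s => deriv riemannZeta s / riemannZeta s) (↑c + ↑t * I) *
        riemannZeta (↑c + ↑t * I) * (Y : ℂ) ^ (↑c + ↑t * I) / (↑c + ↑t * I)

/-- `M_n(Y)`, the residue at `s = 1` of `(ζ'/ζ)^{(n)}(s) ζ(s) Y^s / s`,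
expressed via the Laurent coefficients `C j` of `ζ` and `A j` of `ζ'/ζ`
about `s = 1`. -/
noncomputable def Mterm (C A : ℕ → ℂ) (n : ℕ) (Y : ℝ) : ℂ :=
  (-1 : ℂ) ^ (n + 1) * (1 / ((n : ℂ) + 1)) * ((Y * Real.log Y ^ (n + 1) : ℝ) : ℂ)
  + (-1 : ℂ) ^ (n + 1) *
      ∑ k ∈ Finset.range (n + 1),
        (n.choose k : ℂ) * (-1 : ℂ) ^ k * (k.factorial : ℂ) *
          (-1 + ∑ j ∈ Finset.range (k + 1), (-1 : ℂ) ^ j * C j) *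
          ((Y * Real.log Y ^ (n - k) : ℝ) : ℂ)
  + (n.factorial : ℂ) * A n * ((Y : ℝ) : ℂ)

/-!
Moving the line of integration from `re s = c` to `re s = 1/2 + 1/log Y` crosses only the pole at
`s = 1`, since under RH `ζ'/ζ` has no other singularity to the right of `1/2`; the residue is
`M_n(Y)`. It remains to bound the other three sides of the rectangle.

The bounds rest on a one-sided estimate: under RH every zero lies to the left of the strip, so it
contributes positively to `re (ζ'/ζ)`, and Landau's local argument gives `re (ζ'/ζ) ≥ -C log |t|`
arbitrarily close to the critical line. By Borel–Carathéodory on the disc of radius `α = 1/log Y`,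
`|(ζ'/ζ)^{(n)}| ≪ α⁻ⁿ (|ζ'/ζ| + log |t|)` on the left side. Multiplying by `ζ` removes the
denominator, and the mean squares of `ζ` and `ζ'` just to the right of the critical line, bounded
with a Gaussian weight and Schur's test, finish by Cauchy–Schwarz. On the horizontal sides
`|(ζ'/ζ)^{(n)}| ≪ α⁻ⁿ⁻¹ log |t|` and `ζ(s) ≪ |t|^{1/2}` suffice.
-/

section FractionalPart

open MeasureTheory Set Filter

/-- The tail `∫_X^∞ {x} x^{-s-1} dx` of the Mellin transform of the fractional part. -/
noncomputable def fractTail (X : ℝ) (s : ℂ) : ℂ :=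
  ∫ x in Ioi X, ((Int.fract x : ℝ) : ℂ) * (x : ℂ) ^ (-s - 1)

variable {X : ℝ} {s : ℂ}

lemma norm_fract_mul_cpow_le {x : ℝ} (hx : 0 < x) (s : ℂ) :
    ‖((Int.fract x : ℝ) : ℂ) * (x : ℂ) ^ (-s - 1)‖ ≤ x ^ (-s.re - 1) := by
  rw [norm_mul, norm_real, norm_cpow_eq_rpow_re_of_pos hx, Real.norm_of_nonneg (Int.fract_nonneg x)]
  simpa using mul_le_of_le_one_left (Real.rpow_nonneg hx.le _) (Int.fract_lt_one x).le

lemma integrableOn_fract_mul_cpow (hX : 0 < X) (hs : 0 < s.re) :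
    IntegrableOn (fun x : ℝ => ((Int.fract x : ℝ) : ℂ) * (x : ℂ) ^ (-s - 1)) (Ioi X) := by
  refine Integrable.mono' (integrableOn_Ioi_rpow_of_lt (a := -s.re - 1) (by linarith) hX) ?_ ?_
  · exact ((measurable_fract.complex_ofReal).mul (by fun_prop)).aestronglyMeasurable
  · filter_upwards [ae_restrict_mem measurableSet_Ioi] with x hx
    exact norm_fract_mul_cpow_le (hX.trans hx) s

lemma norm_fractTail_le (hX : 0 < X) (hs : 0 < s.re) : ‖fractTail X s‖ ≤ X ^ (-s.re) / s.re := by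
  have hint := integral_Ioi_rpow_of_lt (a := -s.re - 1) (by linarith) hX
  rw [sub_add_cancel, div_neg, neg_div, neg_neg] at hint
  rw [← hint]
  refine norm_integral_le_of_norm_le (integrableOn_Ioi_rpow_of_lt (by linarith) hX) ?_
  filter_upwards [ae_restrict_mem measurableSet_Ioi] with x hx
  exact norm_fract_mul_cpow_le (hX.trans hx) s

lemma fractTail_eq_mellin (hX : 0 < X) (s : ℂ) :
    fractTail X s = mellin ((Ioi X).indicator fun x => ((Int.fract x : ℝ) : ℂ)) (-s) := by
  have hsub : Ioi X ⊆ Ioi (0 : ℝ) := Ioi_subset_Ioi hX.le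
  rw [mellin, setIntegral_eq_of_subset_of_forall_sdiff_eq_zero measurableSet_Ioi hsub
    fun x hx => by rw [indicator_of_notMem hx.2, smul_zero]]
  refine setIntegral_congr_fun measurableSet_Ioi fun x hx => ?_
  simp only [indicator_of_mem hx, smul_eq_mul, mul_comm]

lemma differentiableAt_fractTail (hX : 0 < X) (hs : 0 < s.re) :
    DifferentiableAt ℂ (fractTail X) s := by
  set f : ℝ → ℂ := (Ioi X).indicator fun x => ((Int.fract x : ℝ) : ℂ)
  have hf_le (x : ℝ) : ‖f x‖ ≤ 1 := by
    refine (norm_indicator_le_norm_self _ x).trans ?_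
    rw [norm_real, Real.norm_of_nonneg (Int.fract_nonneg x)]
    exact (Int.fract_lt_one x).le
  have hf_loc : LocallyIntegrableOn f (Ioi 0) := by
    refine LocallyIntegrable.locallyIntegrableOn ?_ _
    refine (locallyIntegrable_const (1 : ℝ)).mono ?_ ?_
    · exact ((measurable_fract.complex_ofReal).indicator measurableSet_Ioi).aestronglyMeasurable
    · exact .of_forall fun x => by simpa using hf_le x
  have hf_top : f =O[atTop] (fun x : ℝ => x ^ (-(0 : ℝ))) := by
    exact .of_bound 1 (.of_forall fun x => by simpa using hf_le x)
  have hf_bot : f =O[nhdsWithin 0 (Ioi 0)] (fun x : ℝ => x ^ (-(-s.re - 1))) := by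
    refine Asymptotics.IsBigO.of_bound 1 ?_
    filter_upwards [mem_nhdsWithin_of_mem_nhds (Iio_mem_nhds hX)] with x hx
    rw [show f x = 0 from indicator_of_notMem (not_lt.2 (mem_Iio.1 hx).le) _, norm_zero]
    positivity
  have hdiff : DifferentiableAt ℂ (mellin f) (-s) :=
    mellin_differentiableAt_of_isBigO_rpow hf_loc hf_top (by simpa using hs) hf_bot
      (by simp)
  rw [show fractTail X = fun z => mellin f (-z) from funext (fractTail_eq_mellin hX)]
  exact hdiff.comp s differentiable_neg.differentiableAt

lemma sum_Icc_one_ite_lt (N m : ℕ) :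
    ∑ k ∈ Finset.Icc 1 m, (if N < k then (1 : ℝ) else 0) = (m - N : ℕ) := by
  rw [sum_boole]
  congr 1
  rw [show (Finset.Icc 1 m).filter (N < ·) = Finset.Ioc N m by ext; simp; lia, Nat.card_Ioc]

lemma LSeries_ite_lt_eq_mul_integral {N : ℕ} (hN : 1 ≤ N) (hs : 1 < s.re) :
    LSeries (fun k => ((if N < k then (1 : ℝ) else 0 : ℝ) : ℂ)) s =
      s * ∫ x in Ioi (N : ℝ), ((⌊x⌋₊ - N : ℕ) : ℂ) * (x : ℂ) ^ (-s - 1) := by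
  have hN' : (1 : ℝ) ≤ N := by exact_mod_cast hN
  have hO : (fun n => ∑ k ∈ Finset.Icc 1 n, (if N < k then (1 : ℝ) else 0))
      =O[atTop] fun n => (n : ℝ) ^ (1 : ℝ) := by
    refine Asymptotics.IsBigO.of_bound 1 (.of_forall fun n => ?_)
    rw [sum_Icc_one_ite_lt, one_mul, Real.rpow_one, Real.norm_natCast, Real.norm_natCast]
    exact_mod_cast n.sub_le N
  rw [LSeries_eq_mul_integral_of_nonneg _ zero_le_one hs hO (fun n => by positivity),
    setIntegral_eq_of_subset_of_forall_sdiff_eq_zero measurableSet_Ioi (Ioi_subset_Ioi hN') ?_]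
  · refine congrArg (s * ·) (setIntegral_congr_fun measurableSet_Ioi fun x _ => ?_)
    have := sum_Icc_one_ite_lt N ⌊x⌋₊
    simp only [← ofReal_sum, this, neg_add']
    norm_cast
  · intro x hx
    have hle : ⌊x⌋₊ ≤ N := Nat.floor_le_of_le (not_lt.1 hx.2)
    rw [← ofReal_sum, sum_Icc_one_ite_lt, Nat.sub_eq_zero_of_le hle]
    simp

lemma integral_floor_sub_mul_cpow {N : ℕ} (hN : 1 ≤ N) (hs : 1 < s.re) :
    s * ∫ x in Ioi (N : ℝ), ((⌊x⌋₊ - N : ℕ) : ℂ) * (x : ℂ) ^ (-s - 1) =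
      (N : ℂ) ^ (1 - s) / (s - 1) - s * fractTail N s := by
  have hN0 : (0 : ℝ) < N := by exact_mod_cast hN
  have hs0 : s ≠ 0 := ne_zero_of_re_pos (by linarith)
  have hs1 : s - 1 ≠ 0 := ne_zero_of_re_pos (by simpa using hs)
  have hsplit : ∀ x ∈ Ioi (N : ℝ), ((⌊x⌋₊ - N : ℕ) : ℂ) * (x : ℂ) ^ (-s - 1) =
      (x : ℂ) ^ (-s) - N * (x : ℂ) ^ (-s - 1) - ((Int.fract x : ℝ) : ℂ) * (x : ℂ) ^ (-s - 1) := by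
    intro x hx
    have hx0 : 0 < x := hN0.trans hx
    have hfloor : ((⌊x⌋₊ : ℕ) : ℝ) = x - Int.fract x := by
      rw [natCast_floor_eq_intCast_floor hx0.le, Int.self_sub_fract]
    have hcast : ((⌊x⌋₊ - N : ℕ) : ℂ) = x - Int.fract x - N := by
      rw [Nat.cast_sub (Nat.le_floor (mem_Ioi.1 hx).le)]
      exact_mod_cast congrArg (fun y : ℝ => ((y - N : ℝ) : ℂ)) hfloor
    have hpow : (x : ℂ) ^ (-s) = x * (x : ℂ) ^ (-s - 1) := by
      rw [cpow_sub _ _ (ofReal_ne_zero.2 hx0.ne'), cpow_one,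
        mul_div_cancel₀ _ (ofReal_ne_zero.2 hx0.ne')]
    rw [hcast, hpow]
    ring
  have h1 : (-s).re < -1 := by simpa using hs
  have h2 : (-s - 1).re < -1 := by simp; linarith
  have hint1 := integrableOn_Ioi_cpow_of_lt h1 hN0
  have hint2 := integrableOn_Ioi_cpow_of_lt h2 hN0
  have hint3 : IntegrableOn (fun x : ℝ => (x : ℂ) ^ (-s) - N * (x : ℂ) ^ (-s - 1)) (Ioi N) :=
    hint1.sub (hint2.const_mul _)
  have hpow : (N : ℂ) ^ (1 - s) = N * (N : ℂ) ^ (-s) := by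
    rw [sub_eq_add_neg, cpow_add _ _ (by exact_mod_cast hN0.ne'), cpow_one]
  rw [setIntegral_congr_fun measurableSet_Ioi hsplit,
    integral_sub hint3 (integrableOn_fract_mul_cpow hN0 (by linarith)),
    integral_sub hint1 (hint2.const_mul _), integral_const_mul, integral_Ioi_cpow_of_lt h1 hN0,
    integral_Ioi_cpow_of_lt h2 hN0, fractTail, sub_add_cancel, neg_add_eq_sub, ofReal_natCast, hpow]
  have hs1' : 1 - s ≠ 0 := sub_ne_zero.2 (sub_ne_zero.1 hs1).symm
  field_simp
  ring

lemma riemannZeta_eq_sum_add_LSeries_ite_lt (N : ℕ) (hs : 1 < s.re) :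
    riemannZeta s = ∑ n ∈ range N, ((n : ℂ) + 1) ^ (-s) +
      LSeries (fun k => ((if N < k then (1 : ℝ) else 0 : ℝ) : ℂ)) s := by
  have hsum : Summable fun n : ℕ => ((n : ℂ) + 1) ^ (-s) := by
    have := (summable_nat_add_iff 1).2 (summable_one_div_nat_cpow.2 hs)
    simpa [cpow_neg] using this
  have hterm (k : ℕ) :
      LSeries.term (fun k => ((if N < k then (1 : ℝ) else 0 : ℝ) : ℂ)) s (k + (N + 1))
      = ((k + N : ℕ) + 1 : ℂ) ^ (-s) := by
    rw [LSeries.term_of_ne_zero (by lia), if_pos (by lia), cpow_neg]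
    push_cast
    rw [one_div, add_assoc]
  have hzero : ∑ k ∈ range (N + 1),
      LSeries.term (fun k => ((if N < k then (1 : ℝ) else 0 : ℝ) : ℂ)) s k = 0 := by
    refine sum_eq_zero fun k hk => ?_
    rcases eq_or_ne k 0 with rfl | hk0
    · simp
    · rw [LSeries.term_of_ne_zero hk0, if_neg (by simp at hk; lia)]
      simp
  have hsum' : Summable (LSeries.term (fun k => ((if N < k then (1 : ℝ) else 0 : ℝ) : ℂ)) s) := by
    rw [← summable_nat_add_iff (N + 1)]
    exact ((summable_nat_add_iff N).2 hsum).congr fun k => (hterm k).symm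
  rw [LSeries, ← hsum'.sum_add_tsum_nat_add (N + 1), hzero, zero_add, tsum_congr hterm,
    hsum.sum_add_tsum_nat_add, zeta_eq_tsum_one_div_nat_add_one_cpow hs]
  simp [cpow_neg]

/-- Euler summation, continued to `0 < re s` and multiplied by `s - 1` to cover the pole. -/
theorem riemannZeta₁_eq_sum_add {N : ℕ} (hN : 1 ≤ N) (hs : 0 < s.re) :
    riemannZeta₁ s = (s - 1) * ∑ n ∈ range N, ((n : ℂ) + 1) ^ (-s) + (N : ℂ) ^ (1 - s) -
      s * (s - 1) * fractTail N s := by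
  have hN0 : (0 : ℝ) < N := by exact_mod_cast hN
  have hopen : IsOpen {z : ℂ | 0 < z.re} := isOpen_lt continuous_const continuous_re
  have hN' : (N : ℂ) ≠ 0 := by exact_mod_cast hN0.ne'
  have hn (n : ℕ) : (n : ℂ) + 1 ≠ 0 := by exact_mod_cast n.succ_ne_zero
  refine AnalyticOnNhd.eqOn_of_preconnected_of_eventuallyEq (z₀ := 2)
    (g := fun s => (s - 1) * ∑ n ∈ range N, ((n : ℂ) + 1) ^ (-s) + (N : ℂ) ^ (1 - s) -
      s * (s - 1) * fractTail N s)
    (differentiable_riemannZeta₁.differentiableOn.analyticOnNhd hopen)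
    (DifferentiableOn.analyticOnNhd (fun z hz => DifferentiableAt.differentiableWithinAt ?_) hopen)
    (convex_halfSpace_re_gt 0).isPreconnected (by simp) ?_ hs
  · have hR := differentiableAt_fractTail hN0 hz
    have hpow : DifferentiableAt ℂ (fun w : ℂ => (N : ℂ) ^ (1 - w)) z :=
      DifferentiableAt.const_cpow (by fun_prop) (.inl hN')
    have hsum : DifferentiableAt ℂ (fun w : ℂ => ∑ n ∈ range N, ((n : ℂ) + 1) ^ (-w)) z :=
      DifferentiableAt.fun_sum fun n _ => DifferentiableAt.const_cpow (by fun_prop) (.inl (hn n))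
    fun_prop
  · have hnhds : {z : ℂ | 1 < z.re} ∈ nhds (2 : ℂ) :=
      (isOpen_lt continuous_const continuous_re).mem_nhds (by simp)
    filter_upwards [hnhds] with z hz
    have hz1 : z - 1 ≠ 0 := ne_zero_of_re_pos (by simpa using hz)
    have hζ := riemannZeta_eq_inv_sub_mul (sub_ne_zero.1 hz1)
    rw [riemannZeta_eq_sum_add_LSeries_ite_lt N hz, LSeries_ite_lt_eq_mul_integral hN hz,
      integral_floor_sub_mul_cpow hN hz, eq_inv_mul_iff_mul_eq₀ hz1] at hζ
    rw [← hζ, mul_add, mul_sub, mul_div_cancel₀ _ hz1]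
    ring

lemma riemannZeta_eq_sum_add {N : ℕ} (hN : 1 ≤ N) (hs : 0 < s.re) (hs1 : s ≠ 1) :
    riemannZeta s = ∑ n ∈ range N, ((n : ℂ) + 1) ^ (-s) + (N : ℂ) ^ (1 - s) / (s - 1) -
      s * fractTail N s := by
  have h0 : s - 1 ≠ 0 := sub_ne_zero.2 hs1
  rw [riemannZeta_eq_inv_sub_mul hs1, riemannZeta₁_eq_sum_add hN hs]
  field_simp

lemma norm_riemannZeta₁_le (hs : 0 < s.re) :
    ‖riemannZeta₁ s‖ ≤ ‖s‖ + ‖s‖ * ‖s - 1‖ / s.re := by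
  have hR : ‖fractTail 1 s‖ ≤ 1 / s.re := by simpa using norm_fractTail_le one_pos hs
  have hζ : riemannZeta₁ s = s - s * (s - 1) * fractTail 1 s := by
    simpa using riemannZeta₁_eq_sum_add le_rfl hs
  rw [hζ, ← mul_one_div (‖s‖ * ‖s - 1‖), ← norm_mul]
  refine (norm_sub_le _ _).trans ?_
  rw [norm_mul (s * (s - 1))]
  gcongr

lemma sum_inv_sqrt_le (N : ℕ) : ∑ n ∈ range N, (√((n : ℝ) + 1))⁻¹ ≤ 2 * √N := by
  induction N with
  | zero => simp
  | succ N ih =>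
    have hN : √(N : ℝ) ^ 2 = N := Real.sq_sqrt N.cast_nonneg
    have hN1 : √((N : ℝ) + 1) ^ 2 = N + 1 := Real.sq_sqrt (by positivity)
    rw [sum_range_succ, Nat.cast_succ]
    have hstep : (√((N : ℝ) + 1))⁻¹ ≤ 2 * √((N : ℝ) + 1) - 2 * √N := by
      rw [inv_le_iff_one_le_mul₀ (by positivity)]
      nlinarith [sq_nonneg (√((N : ℝ) + 1) - √N)]
    linarith

lemma norm_sum_cpow_neg_le (N : ℕ) (hs : 1 / 2 ≤ s.re) :
    ‖∑ n ∈ range N, ((n : ℂ) + 1) ^ (-s)‖ ≤ 2 * √N := by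
  refine (norm_sum_le _ _).trans ((sum_le_sum fun n _ => ?_).trans (sum_inv_sqrt_le N))
  have hn : (1 : ℝ) ≤ (n : ℝ) + 1 := by simp
  rw [show (n : ℂ) + 1 = ((n + 1 : ℝ) : ℂ) by push_cast; rfl,
    norm_cpow_eq_rpow_re_of_pos (by linarith), Real.sqrt_eq_rpow, ← Real.rpow_neg (by linarith)]
  exact Real.rpow_le_rpow_of_exponent_le hn (by simpa using hs)

/-- The convexity bound on the critical line, by Euler summation up to `n ≈ |im s|`. -/
theorem norm_riemannZeta_le_sqrt (hs : 1 / 2 ≤ s.re) (hs2 : s.re ≤ 2) (ht : 1 ≤ |s.im|) :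
    ‖riemannZeta s‖ ≤ 12 * √|s.im| := by
  set t := |s.im|
  set N := ⌈t⌉₊
  have htN : t ≤ N := Nat.le_ceil t
  have hNt : (N : ℝ) ≤ 2 * t := by linarith [Nat.ceil_lt_add_one (zero_le_one.trans ht)]
  have hN : 1 ≤ N := Nat.one_le_ceil_iff.2 (by linarith)
  have hsq : √t * √t = t := Real.mul_self_sqrt (by linarith)
  have hsqrt1 : 1 ≤ √t := Real.one_le_sqrt.2 ht
  have hs1 : s ≠ 1 := by
    rintro rfl
    norm_num [t] at ht
  have hnorm : ‖s‖ ≤ 3 * t := by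
    have := norm_le_abs_re_add_abs_im s
    rw [abs_of_nonneg (by linarith)] at this
    linarith
  have hnorm' : t ≤ ‖s - 1‖ := by simpa using abs_im_le_norm (s - 1)
  have hN' : (1 : ℝ) ≤ N := ht.trans htN
  have hsqrtN : √(N : ℝ) ≤ 2 * √t := Real.sqrt_le_iff.2 ⟨by positivity, by nlinarith⟩
  have hsum : ‖∑ n ∈ range N, ((n : ℂ) + 1) ^ (-s)‖ ≤ 4 * √t := by
    linarith [norm_sum_cpow_neg_le N hs]
  have hpole : ‖(N : ℂ) ^ (1 - s) / (s - 1)‖ ≤ 2 * √t := by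
    rw [norm_div, norm_natCast_cpow_of_pos hN]
    refine (div_le_self (by positivity) (ht.trans hnorm')).trans (le_trans ?_ hsqrtN)
    rw [Real.sqrt_eq_rpow]
    exact Real.rpow_le_rpow_of_exponent_le hN' (by simp; linarith)
  have htail : ‖s * fractTail N s‖ ≤ 6 * √t := by
    have hR : ‖fractTail N s‖ ≤ 2 * (√t)⁻¹ := by
      refine (norm_fractTail_le (by linarith) (by linarith)).trans ?_
      rw [div_le_iff₀ (by linarith)]
      have hpow : (N : ℝ) ^ (-s.re) ≤ (√t)⁻¹ := by
        refine (Real.rpow_le_rpow_of_exponent_le hN' (neg_le_neg hs)).trans ?_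
        rw [Real.rpow_neg (by positivity), ← Real.sqrt_eq_rpow]
        gcongr
      nlinarith [inv_pos.2 (zero_lt_one.trans_le hsqrt1)]
    calc ‖s * fractTail N s‖ ≤ 3 * t * (2 * (√t)⁻¹) := by rw [norm_mul]; gcongr
      _ = 6 * √t := by field_simp; rw [sq, hsq]; ring
  rw [riemannZeta_eq_sum_add hN (by linarith) hs1]
  calc _ ≤ _ := (norm_sub_le _ _).trans (add_le_add_left (norm_add_le _ _) _)
    _ ≤ 12 * √t := by linarith

end FractionalPart

section OneSidedLogDeriv

open Metric Set
open scoped ComplexConjugate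

variable {f : ℂ → ℂ} {r ρ R M b : ℝ} {z : ℂ}

lemma norm_le_of_forall_norm_eq (hf : Differentiable ℂ f) (hR : 0 < R)
    (hM : ∀ w, ‖w‖ = R → ‖f w‖ ≤ M) (hz : ‖z‖ ≤ R) : ‖f z‖ ≤ M := by
  refine norm_le_of_forall_mem_frontier_norm_le (U := ball (0 : ℂ) R) isBounded_ball
    hf.diffContOnCl (fun w hw => hM w ?_) ?_
  · simpa [frontier_ball _ hR.ne'] using hw
  · simpa [closure_ball _ hR.ne'] using hz

lemma exists_eq_mul_exp_of_ne_zero {c : ℂ} (hf : DifferentiableOn ℂ f (ball c ρ))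
    (h0 : ∀ w ∈ ball c ρ, f w ≠ 0) :
    ∃ h : ℂ → ℂ, h c = 0 ∧
      ∀ w ∈ ball c ρ, HasDerivAt h (logDeriv f w) w ∧ f w = f c * exp (h w) := by
  obtain ⟨h, hc, hh⟩ := ((hf.deriv isOpen_ball).div hf h0).isExactOn_ball.with_val_at c 0
  refine ⟨h, hc, fun w hw => ⟨hh w hw, ?_⟩⟩
  have hder : ∀ u ∈ ball c ρ, HasDerivAt (fun u => f u * exp (-h u)) 0 u := by
    intro u hu
    have hfu := (hf.differentiableAt (isOpen_ball.mem_nhds hu)).hasDerivAt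
    refine (hfu.mul (hh u hu).neg.cexp).congr_deriv ?_
    have := h0 u hu
    simp only [Pi.div_apply, Pi.neg_apply]
    field_simp
    ring
  have hconst := isOpen_ball.is_const_of_deriv_eq_zero (convex_ball c ρ).isPreconnected
    (fun u hu => (hder u hu).differentiableAt.differentiableWithinAt)
    (fun u hu => (hder u hu).deriv) hw (mem_ball_self (pos_of_mem_ball hw))
  rw [hc, neg_zero, exp_zero, mul_one] at hconst
  rw [← hconst, mul_assoc, ← exp_add, neg_add_cancel, exp_zero, mul_one]

/-- Borel–Carathéodory applied to `log (f / f 0)`, then Cauchy's estimate. -/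
lemma norm_logDeriv_le_of_ne_zero (hr : 0 ≤ r) (hrρ : r < ρ) (hf : DifferentiableOn ℂ f (ball 0 ρ))
    (hM : ∀ w ∈ ball 0 ρ, ‖f w‖ ≤ M) (h0 : ∀ w ∈ ball 0 ρ, f w ≠ 0) (hz : ‖z‖ ≤ r) :
    ‖logDeriv f z‖ ≤ 8 * ρ / (ρ - r) ^ 2 * (Real.log (M / ‖f 0‖) + 1) := by
  have h0mem : (0 : ℂ) ∈ ball 0 ρ := mem_ball_self (hr.trans_lt hrρ)
  have hf0 : 0 < ‖f 0‖ := norm_pos_iff.2 (h0 0 h0mem)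
  obtain ⟨h, hh0, hh⟩ := exists_eq_mul_exp_of_ne_zero hf h0
  have hdiff : DifferentiableOn ℂ h (ball 0 ρ) := fun w hw =>
    (hh w hw).1.differentiableAt.differentiableWithinAt
  set A := Real.log (M / ‖f 0‖) + 1
  have hA : 0 < A := by
    linarith [Real.log_nonneg ((one_le_div hf0).2 (hM 0 h0mem))]
  have hre : MapsTo h (ball 0 ρ) {w | w.re ≤ A} := by
    intro w hw
    have hexp : Real.exp (h w).re ≤ M / ‖f 0‖ := by
      rw [le_div_iff₀' hf0, ← norm_exp, ← norm_mul, ← (hh w hw).2]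
      exact hM w hw
    have := Real.log_le_log (Real.exp_pos _) hexp
    rw [Real.log_exp] at this
    exact this.trans (lt_add_one _).le
  set δ := (ρ - r) / 2 with hδ
  have hδ0 : 0 < δ := by positivity [sub_pos.2 hrρ]
  have hclosed : closedBall z δ ⊆ closedBall 0 (ρ - δ) := by
    refine closedBall_subset_closedBall' ?_
    rw [dist_zero_right]
    linarith
  have hsub : closedBall (0 : ℂ) (ρ - δ) ⊆ ball 0 ρ := closedBall_subset_ball (by linarith)
  have hbound : ∀ w ∈ sphere z δ, ‖h w‖ ≤ 2 * A * ρ / δ := by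
    intro w hw
    have hwρ := hclosed (sphere_subset_closedBall hw)
    have hnorm : ‖w‖ ≤ ρ - δ := by simpa using hwρ
    refine (borelCaratheodory_zero hA hdiff hre (hr.trans_lt hrρ) (hsub hwρ) hh0).trans ?_
    have hρ : 0 < ρ := hr.trans_lt hrρ
    gcongr <;> linarith
  rw [← (hh z (hsub (hclosed (mem_closedBall_self hδ0.le)))).1.deriv]
  refine (norm_deriv_le_of_forall_mem_sphere_norm_le hδ0
    (hdiff.diffContOnCl_ball (hclosed.trans hsub)) hbound).trans_eq ?_
  have : ρ - r ≠ 0 := (sub_pos.2 hrρ).ne'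
  rw [hδ]
  field_simp
  ring

/-- Removing a zero `z₀` by a Blaschke factor of the disc of radius `R`. -/
lemma exists_blaschke_quotient (hf : Differentiable ℂ f) (hR : 0 < R) {z₀ : ℂ} (hz₀ : f z₀ = 0) :
    ∃ g : ℂ → ℂ, Differentiable ℂ g ∧ (∀ w, ‖w‖ = R → ‖g w‖ = ‖f w‖) ∧
      R * ‖f 0‖ = ‖z₀‖ * ‖g 0‖ ∧ ∀ w, f w * (R ^ 2 - conj z₀ * w) = R * (w - z₀) * g w := by
  have hR' : (R : ℂ) ≠ 0 := ofReal_ne_zero.2 hR.ne'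
  have hfac (w : ℂ) : f w = (w - z₀) * dslope f z₀ w := by
    simpa [hz₀] using (sub_smul_dslope f z₀ w).symm
  have hd : Differentiable ℂ (dslope f z₀) := by
    rw [← differentiableOn_univ] at hf ⊢
    exact (differentiableOn_dslope Filter.univ_mem).2 hf
  refine ⟨fun w => dslope f z₀ w * ((R ^ 2 - conj z₀ * w) / R), by fun_prop, fun w hw => ?_, ?_,
    fun w => ?_⟩
  · have hconj : (R : ℂ) ^ 2 - conj z₀ * w = w * conj (w - z₀) := by
      rw [map_sub, mul_sub, mul_conj, normSq_eq_norm_sq, hw]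
      push_cast
      ring
    beta_reduce
    rw [hconj, hfac w, norm_mul, norm_div, norm_mul, norm_conj, norm_real, hw,
      Real.norm_of_nonneg hR.le, norm_mul]
    field_simp
  · beta_reduce
    rw [hfac 0, mul_zero, sub_zero, zero_sub, norm_mul, norm_mul, norm_neg, norm_div, norm_pow,
      norm_real, Real.norm_of_nonneg hR.le]
    field_simp
  · rw [hfac w]
    field_simp

lemma re_logDeriv_sub_le_of_blaschke {g : ℂ → ℂ} {z₀ : ℂ} (hf : DifferentiableAt ℂ f z)
    (hg : DifferentiableAt ℂ g z)
    (hfg : ∀ w, f w * (R ^ 2 - conj z₀ * w) = R * (w - z₀) * g w) (hz₀ : ‖z₀‖ < R) (hz : ‖z‖ ≤ r)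
    (hr : r < R) (hre : z₀.re ≤ z.re) (hfz : f z ≠ 0) :
    (logDeriv g z).re - 1 / (R - r) ≤ (logDeriv f z).re := by
  have hR : 0 < R := (norm_nonneg _).trans_lt hz₀
  have hB : R * (R - r) ≤ ‖(R : ℂ) ^ 2 - conj z₀ * z‖ := by
    have := norm_sub_norm_le ((R : ℂ) ^ 2) (conj z₀ * z)
    rw [norm_mul, norm_conj, norm_pow, norm_real, Real.norm_of_nonneg hR.le] at this
    nlinarith [mul_le_mul hz₀.le hz (norm_nonneg z) hR.le]
  have hB0 : (R : ℂ) ^ 2 - conj z₀ * z ≠ 0 :=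
    norm_pos_iff.1 ((mul_pos hR (sub_pos.2 hr)).trans_le hB)
  have hprod : (R : ℂ) * (z - z₀) ≠ 0 ∧ g z ≠ 0 :=
    mul_ne_zero_iff.1 (hfg z ▸ mul_ne_zero hfz hB0)
  have hlog := congrArg (logDeriv · z) (funext hfg)
  beta_reduce at hlog
  rw [logDeriv_mul z hfz hB0 hf (by fun_prop), logDeriv_mul z hprod.1 hprod.2 (by fun_prop) hg,
    logDeriv_const_mul z _ (ofReal_ne_zero.2 hR.ne')] at hlog
  have hz0 : logDeriv (fun w => w - z₀) z = (z - z₀)⁻¹ := by simp [logDeriv_apply]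
  have hconj : logDeriv (fun w => (R : ℂ) ^ 2 - conj z₀ * w) z =
      -(conj z₀ / ((R : ℂ) ^ 2 - conj z₀ * z)) := by
    rw [logDeriv_apply, deriv_const_sub, deriv_const_mul_field, deriv_id'', mul_one, neg_div]
  have hinv : 0 ≤ ((z - z₀)⁻¹).re := by
    rw [inv_re]
    exact div_nonneg (by simpa using hre) (normSq_nonneg _)
  have hsmall : ‖conj z₀ / ((R : ℂ) ^ 2 - conj z₀ * z)‖ ≤ 1 / (R - r) := by
    rw [norm_div, norm_conj, div_le_div_iff₀ (norm_pos_iff.2 hB0) (sub_pos.2 hr), one_mul]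
    exact (mul_le_mul_of_nonneg_right hz₀.le (sub_pos.2 hr).le).trans hB
  rw [hz0, hconj] at hlog
  have hlog_re := congrArg re hlog
  simp only [add_re, neg_re] at hlog_re
  linarith [(abs_le.1 ((abs_re_le_norm _).trans hsmall)).1]

/-- An entire function `f` with `f 0 ≠ 0`, bounded by `M` on the circle of radius `R`, whose zeros
in the disc of radius `ρ` have real part at most `b`. -/
structure LandauData (f : ℂ → ℂ) (R ρ M b : ℝ) : Prop where
  differentiable : Differentiable ℂ f
  norm_le : ∀ w, ‖w‖ = R → ‖f w‖ ≤ M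
  ne_zero : f 0 ≠ 0
  re_le : ∀ w, ‖w‖ < ρ → f w = 0 → w.re ≤ b

namespace LandauData

lemma norm_le_of_norm_le (hf : LandauData f R ρ M b) (hR : 0 < R) (hz : ‖z‖ ≤ R) : ‖f z‖ ≤ M :=
  norm_le_of_forall_norm_eq hf.differentiable hR hf.norm_le hz

lemma blaschke_quotient (hf : LandauData f R ρ M b) (hρR : ρ ≤ R) {g : ℂ → ℂ} {z₀ : ℂ}
    (hz₀ : ‖z₀‖ < ρ) (hg : Differentiable ℂ g) (hgR : ∀ w, ‖w‖ = R → ‖g w‖ = ‖f w‖)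
    (hg0 : R * ‖f 0‖ = ‖z₀‖ * ‖g 0‖)
    (hfg : ∀ w, f w * (R ^ 2 - conj z₀ * w) = R * (w - z₀) * g w) : LandauData g R ρ M b := by
  have hR : 0 < R := (norm_nonneg _).trans_lt (hz₀.trans_le hρR)
  refine ⟨hg, fun w hw => hgR w hw ▸ hf.norm_le w hw, fun h => ?_, fun w hw hgw => ?_⟩
  · rw [h, norm_zero, mul_zero] at hg0
    exact hf.ne_zero (norm_eq_zero.1 ((mul_eq_zero.1 hg0).resolve_left hR.ne'))
  · have hprod : f w * (R ^ 2 - conj z₀ * w) = 0 := by rw [hfg, hgw, mul_zero]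
    refine hf.re_le w hw ((mul_eq_zero.1 hprod).resolve_right fun h => ?_)
    have h' := congrArg norm (sub_eq_zero.1 h)
    rw [norm_mul, norm_conj, norm_pow, norm_real, Real.norm_of_nonneg hR.le] at h'
    nlinarith [mul_lt_mul'' (hz₀.trans_le hρR) (hw.trans_le hρR) (norm_nonneg _) (norm_nonneg _)]

lemma neg_mul_log_le_of_ne_zero (hf : LandauData f R ρ M b) (hr : 0 ≤ r) (hrρ : r < ρ) (hρR : ρ ≤ R)
    {K : ℝ} (hK : 8 * ρ / (ρ - r) ^ 2 ≤ K) (hfree : ∀ w ∈ ball 0 ρ, f w ≠ 0) (hz : ‖z‖ ≤ r) :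
    -(K * (Real.log (M / ‖f 0‖) + 1)) ≤ (logDeriv f z).re := by
  have hR : 0 < R := hr.trans_lt (hrρ.trans_le hρR)
  have hbound := norm_logDeriv_le_of_ne_zero hr hrρ hf.differentiable.differentiableOn
    (fun w hw => hf.norm_le_of_norm_le hR ((mem_ball_zero_iff.1 hw).le.trans hρR)) hfree hz
  have hlog : 0 ≤ Real.log (M / ‖f 0‖) := Real.log_nonneg <|
    (one_le_div (norm_pos_iff.2 hf.ne_zero)).2 (hf.norm_le_of_norm_le hR (by simpa using hR.le))
  nlinarith [(abs_le.1 ((abs_re_le_norm _).trans hbound)).1]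

lemma neg_mul_log_le_of_blaschke_quotient (hf : LandauData f R ρ M b) (hρR : ρ < R) (hr : r < ρ)
    {K : ℝ} (hK : 1 / (R - r) ≤ K * Real.log (R / ρ)) {g : ℂ → ℂ} {z₀ : ℂ} (hz₀ : ‖z₀‖ < ρ)
    (hfz₀ : f z₀ = 0) (hg : Differentiable ℂ g) (hg0 : R * ‖f 0‖ ≤ ρ * ‖g 0‖)
    (hfg : ∀ w, f w * (R ^ 2 - conj z₀ * w) = R * (w - z₀) * g w) (hz : ‖z‖ ≤ r) (hbz : b < z.re)
    (hgz : -(K * (Real.log (M / ‖g 0‖) + 1)) ≤ (logDeriv g z).re) :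
    -(K * (Real.log (M / ‖f 0‖) + 1)) ≤ (logDeriv f z).re := by
  have hρ : 0 < ρ := (norm_nonneg _).trans_lt hz₀
  have hR : 0 < R := hρ.trans hρR
  have hf0 : 0 < ‖f 0‖ := norm_pos_iff.2 hf.ne_zero
  have hM : 0 < M := hf0.trans_le (hf.norm_le_of_norm_le hR (by simpa using hR.le))
  have hg0' : 0 < ‖g 0‖ := pos_of_mul_pos_right ((mul_pos hR hf0).trans_le hg0) hρ.le
  have hK0 : 0 < K := by
    have hpos : 0 < 1 / (R - r) := one_div_pos.2 (by linarith)
    exact pos_of_mul_pos_left (hpos.trans_le hK) (Real.log_pos ((one_lt_div hρ).2 hρR)).le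
  have hfz : f z ≠ 0 := fun h => hbz.not_ge (hf.re_le z (hz.trans_lt hr) h)
  have hstep := re_logDeriv_sub_le_of_blaschke (hf.differentiable z) (hg z) hfg (hz₀.trans hρR) hz
    (hr.trans hρR) ((hf.re_le z₀ hz₀ hfz₀).trans hbz.le) hfz
  have hlog : Real.log (M / ‖g 0‖) ≤ Real.log (M / ‖f 0‖) - Real.log (R / ρ) := by
    rw [← Real.log_div (by positivity) (by positivity)]
    refine Real.log_le_log (by positivity) ?_
    rw [div_div_div_eq, div_le_div_iff₀ hg0' (by positivity)]
    nlinarith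
  nlinarith [mul_le_mul_of_nonneg_left hlog hK0.le]

/-- Landau's one-sided bound: dividing out a zero `z₀` to the left of `z` by its Blaschke factor
lowers `re (f' / f) z` by a bounded amount, and only `O(log (M / ‖f 0‖))` zeros are divided out. -/
theorem exists_neg_mul_log_le_re_logDeriv (hr : 0 ≤ r) (hrρ : r < ρ) (hρR : ρ < R) :
    ∃ K > 0, ∀ {f : ℂ → ℂ} {M b : ℝ}, LandauData f R ρ M b → ∀ {z : ℂ}, ‖z‖ ≤ r → b < z.re →
      -(K * (Real.log (M / ‖f 0‖) + 1)) ≤ (logDeriv f z).re := by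
  have hρ : 0 < ρ := hr.trans_lt hrρ
  have hR : 0 < R := hρ.trans hρR
  have hRρ : 1 < R / ρ := (one_lt_div hρ).2 hρR
  set K := max (8 * ρ / (ρ - r) ^ 2) (1 / (R - r) / Real.log (R / ρ))
  have hK : 1 / (R - r) ≤ K * Real.log (R / ρ) :=
    (div_le_iff₀ (Real.log_pos hRρ)).1 (le_max_right _ _)
  have key (N : ℕ) : ∀ {f : ℂ → ℂ} {M b : ℝ}, LandauData f R ρ M b → M < (R / ρ) ^ N * ‖f 0‖ →
      ∀ {z : ℂ}, ‖z‖ ≤ r → b < z.re → -(K * (Real.log (M / ‖f 0‖) + 1)) ≤ (logDeriv f z).re := by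
    induction N with
    | zero =>
      intro f M b hf hlt
      linarith [hf.norm_le_of_norm_le hR (z := 0) (by simpa using hR.le)]
    | succ N ih =>
      intro f M b hf hlt z hz hbz
      by_cases hfree : ∀ w ∈ ball 0 ρ, f w ≠ 0
      · exact hf.neg_mul_log_le_of_ne_zero hr hrρ hρR.le (le_max_left _ _) hfree hz
      · push Not at hfree
        obtain ⟨z₀, hz₀, hfz₀⟩ := hfree
        rw [mem_ball_zero_iff] at hz₀
        obtain ⟨g, hg, hgR, hg0, hfg⟩ := exists_blaschke_quotient hf.differentiable hR hfz₀
        have hg0' : R * ‖f 0‖ ≤ ρ * ‖g 0‖ := hg0.trans_le (by gcongr)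
        refine hf.neg_mul_log_le_of_blaschke_quotient hρR hrρ hK hz₀ hfz₀ hg hg0' hfg hz hbz
          (ih (hf.blaschke_quotient hρR.le hz₀ hg hgR hg0 hfg) (hlt.trans_le ?_) hz hbz)
        rw [pow_succ, mul_assoc]
        gcongr
        rwa [div_mul_eq_mul_div, div_le_iff₀' hρ]
  refine ⟨K, lt_max_of_lt_left (div_pos (by positivity) (pow_pos (sub_pos.2 hrρ) 2)),
    fun {f M b} hf {z} hz hbz => ?_⟩
  obtain ⟨N, hN⟩ := pow_unbounded_of_one_lt (M / ‖f 0‖) hRρ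
  exact key N hf ((div_lt_iff₀ (norm_pos_iff.2 hf.ne_zero)).1 hN) hz hbz

end LandauData

end OneSidedLogDeriv

section LogDerivUnderRH

open Metric ArithmeticFunction

variable {s z : ℂ} {n : ℕ}

lemma norm_LSeries_le_tsum {f : ℕ → ℂ} {x : ℂ} (hf : LSeriesSummable f x) (hxs : x.re ≤ s.re) :
    ‖LSeries f s‖ ≤ ∑' n, ‖LSeries.term f x n‖ :=
  tsum_of_norm_bounded hf.norm.hasSum (LSeries.norm_term_le_of_re_le_re f hxs)

lemma exists_le_norm_riemannZeta {σ : ℝ} (hσ : 1 < σ) :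
    ∃ c > 0, ∀ s : ℂ, σ ≤ s.re → c ≤ ‖riemannZeta s‖ := by
  have hsum := LSeriesSummable_moebius_iff.2 (show 1 < (σ : ℂ).re from hσ)
  set B := ∑' n, ‖LSeries.term (fun n => (moebius n : ℂ)) (σ : ℂ) n‖
  have _ : 0 ≤ B := tsum_nonneg fun n => norm_nonneg _
  refine ⟨1 / (B + 1), by positivity, fun s hs => ?_⟩
  have hprod := congrArg norm (LSeries_zeta_mul_Lseries_moebius (hσ.trans_le hs))
  rw [LSeries_zeta_eq_riemannZeta (hσ.trans_le hs), norm_mul, norm_one] at hprod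
  rw [div_le_iff₀ (by positivity)]
  nlinarith [norm_nonneg (riemannZeta s), norm_LSeries_le_tsum hsum hs]

lemma exists_norm_logDeriv_riemannZeta_le {σ : ℝ} (hσ : 1 < σ) :
    ∃ B ≥ 0, ∀ s : ℂ, σ ≤ s.re → ‖logDeriv riemannZeta s‖ ≤ B := by
  refine ⟨∑' n, ‖LSeries.term (fun n => (vonMangoldt n : ℂ)) (σ : ℂ) n‖,
    tsum_nonneg fun n => norm_nonneg _, fun s hs => ?_⟩
  have h := norm_LSeries_le_tsum (LSeriesSummable_vonMangoldt (show 1 < (σ : ℂ).re from hσ)) hs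
  rwa [LSeries_vonMangoldt_eq_deriv_riemannZeta_div (hσ.trans_le hs), neg_div, norm_neg] at h

lemma riemannZeta₁_eq_sub_one_mul (hs : s ≠ 1) : riemannZeta₁ s = (s - 1) * riemannZeta s := by
  rw [riemannZeta_eq_inv_sub_mul hs, mul_inv_cancel_left₀ (sub_ne_zero.2 hs)]

lemma riemannZeta_ne_zero_of_half_lt_re (hRH : RiemannHypothesis) (hs : 1 / 2 < s.re) :
    riemannZeta s ≠ 0 := by
  intro h
  have hs1 : s ≠ 1 := fun h1 => riemannZeta_one_ne_zero (h1 ▸ h)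
  refine hs.ne' (hRH s h ?_ hs1)
  rintro ⟨k, rfl⟩
  simp at hs
  linarith [k.cast_nonneg (α := ℝ)]

lemma re_le_half_of_riemannZeta₁_eq_zero (hRH : RiemannHypothesis) (h : riemannZeta₁ s = 0) :
    s.re ≤ 1 / 2 := by
  have hs1 : s ≠ 1 := by rintro rfl; simp [riemannZeta₁_one] at h
  by_contra! hs
  rw [riemannZeta₁_eq_sub_one_mul hs1] at h
  exact mul_ne_zero (sub_ne_zero.2 hs1) (riemannZeta_ne_zero_of_half_lt_re hRH hs) h

lemma logDeriv_riemannZeta_eq (hs : s ≠ 1) (hζ : riemannZeta s ≠ 0) :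
    logDeriv riemannZeta s = logDeriv riemannZeta₁ s - (s - 1)⁻¹ := by
  have hs' : s - 1 ≠ 0 := sub_ne_zero.2 hs
  have heq : riemannZeta₁ =ᶠ[nhds s] fun z => (z - 1) * riemannZeta z := by
    filter_upwards [isOpen_ne.mem_nhds hs] with z hz using riemannZeta₁_eq_sub_one_mul hz
  rw [(logDeriv_congr_nhds heq).eq_of_nhds,
    logDeriv_mul s hs' hζ (by fun_prop) (differentiableAt_riemannZeta hs)]
  simp [logDeriv_apply]

lemma one_le_log_abs_add_four (t : ℝ) : 1 ≤ Real.log (|t| + 4) := by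
  rw [Real.le_log_iff_exp_le (by positivity)]
  linarith [Real.exp_one_lt_d9, abs_nonneg t]

lemma one_le_log_abs_add_five (t : ℝ) : 1 ≤ Real.log (|t| + 5) :=
  (one_le_log_abs_add_four t).trans (Real.log_le_log (by positivity) (by linarith))

lemma exists_le_norm_riemannZeta₁ :
    ∃ c > 0, ∀ t : ℝ, c ≤ ‖riemannZeta₁ (5 / 4 + t * I)‖ := by
  obtain ⟨c, hc, hζ⟩ := exists_le_norm_riemannZeta (σ := 5 / 4) (by norm_num)
  refine ⟨c / 4, by positivity, fun t => ?_⟩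
  set s : ℂ := 5 / 4 + t * I with hs
  have hre : s.re = 5 / 4 := by simp [hs]
  have hs1 : s ≠ 1 := by intro h; rw [h] at hre; norm_num at hre
  have hdist := re_le_norm (s - 1)
  rw [sub_re, hre, one_re] at hdist
  rw [riemannZeta₁_eq_sub_one_mul hs1, norm_mul]
  nlinarith [hζ s hre.ge]

lemma landauData_riemannZeta₁ (hRH : RiemannHypothesis) (t : ℝ) :
    LandauData (fun w => riemannZeta₁ (5 / 4 + t * I + w)) (6 / 5) (4 / 5)
      (20 * (|t| + 4) ^ 2) (-3 / 4) where
  differentiable := differentiable_riemannZeta₁.comp (by fun_prop)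
  norm_le w hw := by
    set v : ℂ := 5 / 4 + t * I + w with hv
    have hvre : 1 / 20 ≤ v.re := by
      have := neg_le_of_abs_le ((abs_re_le_norm w).trans hw.le)
      simp [hv]; linarith
    have hv1 : ‖v - 1‖ ≤ |t| + 29 / 20 := by
      have : v - 1 = (1 / 4 + t * I) + w := by rw [hv]; ring
      calc ‖v - 1‖ ≤ ‖(1 / 4 : ℂ)‖ + ‖(t : ℂ) * I‖ + ‖w‖ := by
            rw [this]; exact norm_add₃_le
        _ = |t| + 29 / 20 := by rw [hw]; norm_num; ring
    have hv0 : ‖v‖ ≤ |t| + 4 := by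
      have := norm_add_le (v - 1) 1
      rw [sub_add_cancel, norm_one] at this
      linarith
    calc ‖riemannZeta₁ v‖ ≤ ‖v‖ + ‖v‖ * ‖v - 1‖ / v.re := norm_riemannZeta₁_le (by linarith)
      _ ≤ ‖v‖ + ‖v‖ * ‖v - 1‖ / (1 / 20) := by gcongr
      _ = ‖v‖ * (1 + 20 * ‖v - 1‖) := by ring
      _ ≤ (|t| + 4) * (1 + 20 * (|t| + 29 / 20)) := by gcongr
      _ ≤ 20 * (|t| + 4) ^ 2 := by nlinarith [abs_nonneg t]
  ne_zero h := by
    have := re_le_half_of_riemannZeta₁_eq_zero hRH h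
    norm_num at this
  re_le w _ h := by
    have := re_le_half_of_riemannZeta₁_eq_zero hRH h
    norm_num at this
    linarith

lemma exists_neg_log_le_re_logDeriv_riemannZeta₁ (hRH : RiemannHypothesis) :
    ∃ C > 0, ∀ s : ℂ, 1 / 2 < s.re → s.re ≤ 2 →
      -(C * Real.log (|s.im| + 4)) ≤ (logDeriv riemannZeta₁ s).re := by
  obtain ⟨K, hK, hLandau⟩ :=
    LandauData.exists_neg_mul_log_le_re_logDeriv (r := 3 / 4) (ρ := 4 / 5) (R := 6 / 5)
      (by norm_num) (by norm_num) (by norm_num)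
  obtain ⟨c, hc, hcenter⟩ := exists_le_norm_riemannZeta₁
  refine ⟨K * (|Real.log (20 / c)| + 3), by positivity, fun s hs hs2 => ?_⟩
  set t := s.im
  set T := |t| + 4
  set s₀ : ℂ := 5 / 4 + t * I with hs₀
  have _ : 0 < T := by positivity
  have hlogT : 1 ≤ Real.log T := one_le_log_abs_add_four t
  have hdiff : s - s₀ = ((s.re - 5 / 4 : ℝ) : ℂ) := by apply Complex.ext <;> simp [hs₀, t]
  have hnorm : ‖s - s₀‖ ≤ 3 / 4 := by
    rw [hdiff, norm_real, Real.norm_eq_abs, abs_le]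
    constructor <;> linarith
  have hlog : Real.log (20 * T ^ 2 / ‖riemannZeta₁ s₀‖) ≤
      |Real.log (20 / c)| + 2 * Real.log T :=
    calc Real.log (20 * T ^ 2 / ‖riemannZeta₁ s₀‖) ≤ Real.log (20 / c * T ^ 2) := by
          have hpos := hc.trans_le (hcenter t)
          refine Real.log_le_log (by positivity) ?_
          rw [div_mul_eq_mul_div]
          gcongr
          exact hcenter t
      _ = Real.log (20 / c) + 2 * Real.log T := by
          rw [Real.log_mul (by positivity) (by positivity), Real.log_pow, Nat.cast_ofNat]
      _ ≤ _ := by gcongr; exact le_abs_self _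
  have h := hLandau (landauData_riemannZeta₁ hRH t) hnorm (by rw [hdiff, ofReal_re]; linarith)
  have hcomp : logDeriv (fun w => riemannZeta₁ (s₀ + w)) (s - s₀) = logDeriv riemannZeta₁ s := by
    rw [logDeriv_apply, logDeriv_apply, deriv_comp_const_add, add_sub_cancel]
  rw [hcomp, add_zero] at h
  refine le_trans (neg_le_neg ?_) h
  rw [mul_assoc]
  gcongr
  nlinarith [abs_nonneg (Real.log (20 / c))]

lemma exists_neg_log_le_re_logDeriv_riemannZeta (hRH : RiemannHypothesis) :
    ∃ C > 0, ∀ s : ℂ, 1 / 2 < s.re → s.re ≤ 2 → (s.re < 1 ∨ 1 ≤ |s.im|) →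
      -(C * Real.log (|s.im| + 4)) ≤ (logDeriv riemannZeta s).re := by
  obtain ⟨C, hC, h⟩ := exists_neg_log_le_re_logDeriv_riemannZeta₁ hRH
  refine ⟨C + 1, by positivity, fun s hs hs2 hpole => ?_⟩
  have hs1 : s ≠ 1 := by rintro rfl; norm_num at hpole
  have hinv : ((s - 1)⁻¹).re ≤ 1 := by
    rcases hpole with hre | him
    · rw [inv_re]
      refine (div_nonpos_of_nonpos_of_nonneg ?_ (normSq_nonneg _)).trans zero_le_one
      simpa using hre.le
    · refine (re_le_norm _).trans ?_
      rw [norm_inv]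
      refine inv_le_one_of_one_le₀ (him.trans ?_)
      simpa using abs_im_le_norm (s - 1)
  rw [logDeriv_riemannZeta_eq hs1 (riemannZeta_ne_zero_of_half_lt_re hRH hs), sub_re]
  linarith [h s hs hs2, one_le_log_abs_add_four s.im]

/-- The points of `1 / 2 < re z ≤ 2` that lie to the left of, or at height at least one from, the
pole of `ζ` at `1`. -/
def stripAwayFromOne : Set ℂ := {z | 1 / 2 < z.re ∧ z.re ≤ 2 ∧ (z.re < 1 ∨ 1 ≤ |z.im|)}

lemma differentiableAt_deriv_riemannZeta (hs : s ≠ 1) :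
    DifferentiableAt ℂ (deriv riemannZeta) s :=
  have hdiff : DifferentiableOn ℂ riemannZeta {1}ᶜ := fun _ hz =>
    (differentiableAt_riemannZeta hz).differentiableWithinAt
  ((hdiff.analyticOnNhd isOpen_compl_singleton).deriv s hs).differentiableAt

lemma differentiableAt_logDeriv_riemannZeta (hs : s ≠ 1) (hζ : riemannZeta s ≠ 0) :
    DifferentiableAt ℂ (logDeriv riemannZeta) s :=
  (differentiableAt_deriv_riemannZeta hs).div (differentiableAt_riemannZeta hs) hζ

lemma differentiableOn_logDeriv_riemannZeta (hRH : RiemannHypothesis) :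
    DifferentiableOn ℂ (logDeriv riemannZeta) stripAwayFromOne := by
  rintro z ⟨hz, -, hpole⟩
  refine (differentiableAt_logDeriv_riemannZeta ?_
    (riemannZeta_ne_zero_of_half_lt_re hRH hz)).differentiableWithinAt
  rintro rfl
  norm_num at hpole

lemma exists_neg_log_lt_re_logDeriv_riemannZeta (hRH : RiemannHypothesis) :
    ∃ C > 0, ∀ (t : ℝ), ∀ z ∈ stripAwayFromOne, |z.im - t| < 1 →
      -(C * Real.log (|t| + 5)) < (logDeriv riemannZeta z).re := by
  obtain ⟨C, hC, h⟩ := exists_neg_log_le_re_logDeriv_riemannZeta hRH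
  refine ⟨C, hC, fun t z ⟨hz, hz2, hpole⟩ ht => lt_of_lt_of_le ?_ (h z hz hz2 hpole)⟩
  have him := abs_sub_abs_le_abs_sub z.im t
  have hlog : Real.log (|z.im| + 4) < Real.log (|t| + 5) :=
    Real.log_lt_log (by positivity) (by linarith)
  exact neg_lt_neg (mul_lt_mul_of_pos_left hlog hC)

/-- Borel–Carathéodory for a function whose real part is bounded below. -/
lemma norm_sub_le_of_neg_lt_re {f : ℂ → ℂ} {R A : ℝ} (hR : 0 < R)
    (hf : DifferentiableOn ℂ f (ball s R)) (hA : ∀ z ∈ ball s R, -A < (f z).re)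
    (hz : z ∈ ball s R) :
    ‖f z - f s‖ ≤ 2 * ((f s).re + A) * ‖z - s‖ / (R - ‖z - s‖) := by
  have hs := hA s (mem_ball_self hR)
  have hmaps : Set.MapsTo (fun w => s + w) (ball 0 R) (ball s R) := fun w hw => by
    simpa [dist_eq_norm] using hw
  have h := borelCaratheodory_zero (f := fun w => f s - f (s + w)) (M := (f s).re + A) (R := R)
    (z := z - s) (by linarith) ((hf.comp (by fun_prop) hmaps).const_sub _) (fun w hw => ?_) hR
    (by simpa [dist_eq_norm] using hz) (by simp)
  · rwa [add_sub_cancel, norm_sub_rev] at h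
  · have := hA (s + w) (hmaps hw)
    change (f s - f (s + w)).re ≤ (f s).re + A
    rw [sub_re]
    linarith

lemma norm_iteratedDeriv_le_of_neg_lt_re {f : ℂ → ℂ} {R A : ℝ} (hR : 0 < R)
    (hf : DifferentiableOn ℂ f (ball s R)) (hA : ∀ z ∈ ball s R, -A < (f z).re) (n : ℕ) :
    ‖iteratedDeriv n f s‖ ≤ n.factorial * (3 * ‖f s‖ + 2 * A) / (R / 2) ^ n := by
  refine norm_iteratedDeriv_le_of_forall_mem_sphere_norm_le n (by positivity)
    (hf.diffContOnCl_ball (closedBall_subset_ball (by linarith))) fun z hz => ?_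
  have hz' : ‖z - s‖ = R / 2 := mem_sphere_iff_norm.1 hz
  have h := norm_sub_le_of_neg_lt_re hR hf hA (mem_ball_iff_norm.2 (by linarith))
  have hquot : 2 * ((f s).re + A) * ‖z - s‖ / (R - ‖z - s‖) = 2 * ((f s).re + A) := by
    rw [hz', sub_half, mul_div_cancel_right₀ _ (by positivity)]
  linarith [norm_sub_norm_le (f z) (f s), re_le_norm (f s)]

lemma ball_subset_stripAwayFromOne {r : ℝ} (hs : 1 / 2 + r ≤ s.re) (hs2 : s.re + r ≤ 2)
    (hpole : s.re + r ≤ 1 ∨ 1 + r ≤ |s.im|) : ball s r ⊆ stripAwayFromOne := by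
  intro z hz
  rw [mem_ball_iff_norm] at hz
  have hre := abs_lt.1 ((abs_re_le_norm (z - s)).trans_lt hz)
  have him := (abs_im_le_norm (z - s)).trans hz.le
  rw [sub_re] at hre
  rw [sub_im, abs_sub_comm] at him
  refine ⟨by linarith, by linarith, hpole.imp (fun h => by linarith) fun h => ?_⟩
  linarith [abs_sub_abs_le_abs_sub s.im z.im]

lemma exists_norm_iteratedDeriv_logDeriv_riemannZeta_le (hRH : RiemannHypothesis) (n : ℕ) :
    ∃ C > 0, ∀ α > 0, α ≤ 1 / 8 → ∀ s : ℂ, 1 / 2 + α ≤ s.re → s.re ≤ 5 / 4 →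
      (s.re + α ≤ 1 ∨ 2 ≤ |s.im|) →
      ‖iteratedDeriv n (logDeriv riemannZeta) s‖ ≤
        C / α ^ n * (‖logDeriv riemannZeta s‖ + Real.log (|s.im| + 5)) := by
  obtain ⟨C, hC, h⟩ := exists_neg_log_lt_re_logDeriv_riemannZeta hRH
  refine ⟨n.factorial * 2 ^ n * (3 + 2 * C), by positivity, fun α hα hα8 s hs hs2 hpole => ?_⟩
  have hsub := ball_subset_stripAwayFromOne hs (by linarith)
    (hpole.imp_right fun h => by linarith)
  have hbound := norm_iteratedDeriv_le_of_neg_lt_re hα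
    ((differentiableOn_logDeriv_riemannZeta hRH).mono hsub)
    (fun z hz => h s.im z (hsub hz) ?_) n
  · have hlog := one_le_log_abs_add_five s.im
    calc _ ≤ _ := hbound
      _ ≤ n.factorial * ((3 + 2 * C) * (‖logDeriv riemannZeta s‖ + Real.log (|s.im| + 5))) /
          (α / 2) ^ n := by
        gcongr
        nlinarith [norm_nonneg (logDeriv riemannZeta s),
          mul_nonneg hC.le (norm_nonneg (logDeriv riemannZeta s))]
      _ = _ := by rw [div_pow]; field_simp
  · rw [← sub_im]
    exact (abs_im_le_norm _).trans_lt ((mem_ball_iff_norm.1 hz).trans_le (by linarith))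

lemma exists_norm_iteratedDeriv_logDeriv_mul_riemannZeta_le (hRH : RiemannHypothesis) (n : ℕ) :
    ∃ C > 0, ∀ α > 0, α ≤ 1 / 8 → ∀ s : ℂ, s.re = 1 / 2 + α →
      ‖iteratedDeriv n (logDeriv riemannZeta) s * riemannZeta s‖ ≤
        C / α ^ n * (‖deriv riemannZeta s‖ + Real.log (|s.im| + 5) * ‖riemannZeta s‖) := by
  obtain ⟨C, hC, h⟩ := exists_norm_iteratedDeriv_logDeriv_riemannZeta_le hRH n
  refine ⟨C, hC, fun α hα hα8 s hs => ?_⟩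
  have hζ := riemannZeta_ne_zero_of_half_lt_re hRH (s := s) (by linarith)
  have hdiv : ‖logDeriv riemannZeta s‖ * ‖riemannZeta s‖ = ‖deriv riemannZeta s‖ := by
    rw [← norm_mul, logDeriv_apply, div_mul_cancel₀ _ hζ]
  rw [norm_mul, ← hdiv, ← add_mul, ← mul_assoc]
  gcongr
  exact h α hα hα8 s hs.ge (by linarith) (Or.inl (by linarith))

lemma norm_logDeriv_riemannZeta_sub_le (hRH : RiemannHypothesis) {c : ℂ} {A B α : ℝ}
    (hc : ball c (3 / 4) ⊆ stripAwayFromOne)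
    (hA : ∀ z ∈ ball c (3 / 4), -A < (logDeriv riemannZeta z).re)
    (hB : ‖logDeriv riemannZeta c‖ ≤ B) (hα : 0 < α) (hs : ‖s - c‖ ≤ 3 / 4 - α) :
    ‖logDeriv riemannZeta s - logDeriv riemannZeta c‖ ≤ 2 * (B + A) * (3 / 4) / α := by
  refine (norm_sub_le_of_neg_lt_re (by norm_num)
    ((differentiableOn_logDeriv_riemannZeta hRH).mono hc) hA
    (mem_ball_iff_norm.2 (by linarith))).trans ?_
  have hre := (re_le_norm (logDeriv riemannZeta c)).trans hB
  have hcenter := hA c (mem_ball_self (by norm_num))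
  gcongr <;> linarith

lemma exists_norm_logDeriv_riemannZeta_le_div (hRH : RiemannHypothesis) :
    ∃ C > 0, ∀ α > 0, α ≤ 1 / 8 → ∀ s : ℂ, 1 / 2 + α ≤ s.re → s.re ≤ 5 / 4 → 2 ≤ |s.im| →
      ‖logDeriv riemannZeta s‖ ≤ C / α * Real.log (|s.im| + 5) := by
  obtain ⟨C, hC, h⟩ := exists_neg_log_lt_re_logDeriv_riemannZeta hRH
  obtain ⟨B, hB, hBound⟩ := exists_norm_logDeriv_riemannZeta_le (σ := 5 / 4) (by norm_num)
  refine ⟨3 * B + 2 * C, by positivity, fun α hα hα8 s hs hs2 ht => ?_⟩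
  set l := Real.log (|s.im| + 5)
  have hl : 1 ≤ l := one_le_log_abs_add_five s.im
  set c : ℂ := 5 / 4 + s.im * I with hc
  have hcre : c.re = 5 / 4 := by simp [hc]
  have hcim : c.im = s.im := by simp [hc]
  have hsub : ball c (3 / 4) ⊆ stripAwayFromOne :=
    ball_subset_stripAwayFromOne (by linarith) (by linarith)
      (Or.inr (by rw [hcim]; linarith))
  have hsc : ‖s - c‖ ≤ 3 / 4 - α := by
    have : s - c = ((s.re - 5 / 4 : ℝ) : ℂ) := by apply Complex.ext <;> simp [hc]
    rw [this, norm_real, Real.norm_eq_abs, abs_le]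
    constructor <;> linarith
  have hA : ∀ z ∈ ball c (3 / 4), -(C * l) < (logDeriv riemannZeta z).re := fun z hz =>
    h s.im z (hsub hz) <| by
      rw [← hcim, ← sub_im]
      exact (abs_im_le_norm _).trans_lt ((mem_ball_iff_norm.1 hz).trans (by norm_num))
  have hcenter := hBound c hcre.ge
  have hHarnack := norm_logDeriv_riemannZeta_sub_le hRH hsub hA hcenter hα hsc
  calc ‖logDeriv riemannZeta s‖
      ≤ ‖logDeriv riemannZeta s - logDeriv riemannZeta c‖ + ‖logDeriv riemannZeta c‖ := by
        simpa using norm_add_le (logDeriv riemannZeta s - logDeriv riemannZeta c)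
          (logDeriv riemannZeta c)
    _ ≤ 2 * (B + C * l) * (3 / 4) / α + B * 1 := by linarith
    _ ≤ 2 * (B * l + C * l) * (3 / 4) / α + B * (l / α) := by
        have : 1 ≤ l / α := (one_le_div hα).2 (by linarith)
        gcongr
        nlinarith
    _ ≤ (3 * B + 2 * C) / α * l := by
        have : 0 < l / α := by positivity
        have e : (3 * B + 2 * C) / α * l - (2 * (B * l + C * l) * (3 / 4) / α + B * (l / α)) =
            (B / 2 + C / 2) * (l / α) := by ring
        nlinarith [show 0 ≤ (B / 2 + C / 2) * (l / α) by positivity]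

lemma exists_norm_iteratedDeriv_logDeriv_riemannZeta_le_div (hRH : RiemannHypothesis) (n : ℕ) :
    ∃ C > 0, ∀ α > 0, α ≤ 1 / 8 → ∀ s : ℂ, 1 / 2 + α ≤ s.re → s.re ≤ 5 / 4 → 2 ≤ |s.im| →
      ‖iteratedDeriv n (logDeriv riemannZeta) s‖ ≤ C / α ^ (n + 1) * Real.log (|s.im| + 5) := by
  obtain ⟨C, hC, h⟩ := exists_norm_iteratedDeriv_logDeriv_riemannZeta_le hRH n
  obtain ⟨C', hC', h'⟩ := exists_norm_logDeriv_riemannZeta_le_div hRH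
  refine ⟨C * (C' + 1), by positivity, fun α hα hα8 s hs hs2 ht => ?_⟩
  have hlog := one_le_log_abs_add_five s.im
  have hα1 : 1 ≤ 1 / α := (one_le_div hα).2 (by linarith)
  calc ‖iteratedDeriv n (logDeriv riemannZeta) s‖
      ≤ C / α ^ n * (‖logDeriv riemannZeta s‖ + 1 * Real.log (|s.im| + 5)) := by
        rw [one_mul]; exact h α hα hα8 s hs hs2 (Or.inr ht)
    _ ≤ C / α ^ n * (C' / α * Real.log (|s.im| + 5) + 1 / α * Real.log (|s.im| + 5)) := by
        gcongr
        exact h' α hα hα8 s hs hs2 ht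
    _ = _ := by rw [pow_succ]; field_simp

end LogDerivUnderRH

section GaussianMeanValue

open MeasureTheory ComplexConjugate

lemma integral_cexp_mul_gaussian {T : ℝ} (hT : 0 < T) (x : ℝ) :
    ∫ t : ℝ, cexp (I * x * t) * cexp (-((1 / T ^ 2 : ℝ) : ℂ) * t ^ 2) =
      ((√Real.pi * T * Real.exp (-(T ^ 2 * x ^ 2 / 4)) : ℝ) : ℂ) := by
  have hscale :
      ((Real.pi : ℂ) / ((1 / T ^ 2 : ℝ) : ℂ)) ^ (1 / 2 : ℂ) = ((√Real.pi * T : ℝ) : ℂ) := by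
    have hbase : (Real.pi : ℂ) / ((1 / T ^ 2 : ℝ) : ℂ) = ((Real.pi * T ^ 2 : ℝ) : ℂ) := by
      push_cast; field_simp
    have hhalf : (1 / 2 : ℂ) = ((1 / 2 : ℝ) : ℂ) := by push_cast; rfl
    rw [hbase, hhalf, ← ofReal_cpow (by positivity), ← Real.sqrt_eq_rpow,
      Real.sqrt_mul (by positivity), Real.sqrt_sq hT.le]
  rw [fourierIntegral_gaussian (by rw [ofReal_re]; positivity) x, hscale]
  push_cast
  congr 2
  field_simp

variable {X : Type*} [MeasurableSpace X] {μ : Measure X} {a : X → ℂ} {θ : X → ℝ} {T S : ℝ}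

lemma lintegral_prod_mul_kernel_le [SFinite μ] {g : X → ENNReal} {k : X → X → ENNReal} {S : ENNReal}
    (hg : Measurable g) (hk : Measurable (Function.uncurry k)) (hkS : ∀ x, ∫⁻ y, k x y ∂μ ≤ S) :
    ∫⁻ z, g z.1 * k z.1 z.2 ∂(μ.prod μ) ≤ (∫⁻ x, g x ∂μ) * S := by
  have hkx : ∀ x, Measurable (k x) := fun x => hk.comp measurable_prodMk_left
  have hmeas : Measurable fun z : X × X => g z.1 * k z.1 z.2 := (hg.comp measurable_fst).mul hk
  rw [lintegral_prod _ hmeas.aemeasurable, ← lintegral_mul_const _ hg]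
  refine lintegral_mono fun x => ?_
  calc ∫⁻ y, g x * k x y ∂μ = g x * ∫⁻ y, k x y ∂μ := lintegral_const_mul _ (hkx x)
    _ ≤ g x * S := by gcongr; exact hkS x

/-- Schur's test for a symmetric kernel, from `2 |a x| |a y| ≤ |a x|² + |a y|²`. -/
lemma norm_integral_mul_conj_mul_kernel_le [SFinite μ] {k : X → X → ℝ} (ha : Measurable a)
    (ha2 : Integrable (fun x => ‖a x‖ ^ 2) μ) (hk : Measurable (Function.uncurry k))
    (hk0 : ∀ x y, 0 ≤ k x y) (hsymm : ∀ x y, k x y = k y x) (hS : 0 ≤ S)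
    (hkS : ∀ x, ∫⁻ y, ENNReal.ofReal (k x y) ∂μ ≤ ENNReal.ofReal S) :
    ‖∫ z, a z.1 * conj (a z.2) * (k z.1 z.2 : ℂ) ∂(μ.prod μ)‖ ≤ S * ∫ x, ‖a x‖ ^ 2 ∂μ := by
  set Q := ∫ x, ‖a x‖ ^ 2 ∂μ
  have hQ0 : 0 ≤ Q := integral_nonneg fun x => by positivity
  have hQl : ∫⁻ x, ENNReal.ofReal (‖a x‖ ^ 2) ∂μ = ENNReal.ofReal Q :=
    (ofReal_integral_eq_lintegral_ofReal ha2 (.of_forall fun x => by positivity)).symm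
  set κ : X → X → ENNReal := fun x y => ENNReal.ofReal (k x y)
  have hκ : Measurable (Function.uncurry κ) := hk.ennreal_ofReal
  set g : X → ENNReal := fun x => ENNReal.ofReal (‖a x‖ ^ 2)
  have hgm : Measurable g := by fun_prop
  have hg1 : Measurable fun z : X × X => g z.1 * κ z.1 z.2 := (hgm.comp measurable_fst).mul hκ
  have hleft : ∫⁻ z, g z.1 * κ z.1 z.2 ∂(μ.prod μ) ≤ ENNReal.ofReal (Q * S) := by
    rw [ENNReal.ofReal_mul hQ0, ← hQl]
    exact lintegral_prod_mul_kernel_le hgm hκ hkS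
  have hright : ∫⁻ z, g z.2 * κ z.1 z.2 ∂(μ.prod μ) ≤ ENNReal.ofReal (Q * S) := by
    rw [← lintegral_prod_swap]
    simpa only [Prod.fst_swap, Prod.snd_swap, κ, hsymm] using hleft
  have hpoint : ∀ z : X × X, ‖a z.1 * conj (a z.2) * (k z.1 z.2 : ℂ)‖ₑ ≤
      ENNReal.ofReal (1 / 2) * (g z.1 * κ z.1 z.2 + g z.2 * κ z.1 z.2) := fun z => by
    have hkz := hk0 z.1 z.2
    rw [← ENNReal.ofReal_mul (by positivity), ← ENNReal.ofReal_mul (by positivity),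
      ← ENNReal.ofReal_add (by positivity) (by positivity),
      ← ENNReal.ofReal_mul (by positivity), ← ofReal_norm, norm_mul, norm_mul, norm_real,
      norm_conj, Real.norm_of_nonneg hkz]
    refine ENNReal.ofReal_le_ofReal ?_
    nlinarith [mul_le_mul_of_nonneg_right (two_mul_le_add_sq ‖a z.1‖ ‖a z.2‖) hkz]
  rw [← ENNReal.ofReal_le_ofReal_iff (by positivity), ofReal_norm]
  calc _ ≤ ∫⁻ z, ENNReal.ofReal (1 / 2) * (g z.1 * κ z.1 z.2 + g z.2 * κ z.1 z.2) ∂(μ.prod μ) :=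
        (enorm_integral_le_lintegral_enorm _).trans (lintegral_mono hpoint)
    _ ≤ ENNReal.ofReal (1 / 2) * (ENNReal.ofReal (Q * S) + ENNReal.ofReal (Q * S)) := by
        rw [lintegral_const_mul' _ _ ENNReal.ofReal_ne_top, lintegral_add_left hg1]
        gcongr
    _ = ENNReal.ofReal (S * Q) := by
        rw [← ENNReal.ofReal_add (by positivity) (by positivity),
          ← ENNReal.ofReal_mul (by positivity)]
        congr 1; ring

/-- The generalised Dirichlet polynomial `t ↦ ∫ a x * e ^ (-i θ(x) t) dμ(x)` with amplitude `a` and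
frequencies `θ`. -/
noncomputable def phaseIntegral (μ : Measure X) (a : X → ℂ) (θ : X → ℝ) (t : ℝ) : ℂ :=
  ∫ x, a x * cexp (-(I * θ x * t)) ∂μ

/-- The integrand obtained by expanding `exp (-t² / T²) * ‖phaseIntegral μ a θ t‖²` as a double
integral. -/
noncomputable def gaussianPhaseKernel (a : X → ℂ) (θ : X → ℝ) (T t : ℝ) (z : X × X) : ℂ :=
  a z.1 * conj (a z.2) *
    (cexp (I * (θ z.2 - θ z.1 : ℝ) * t) * cexp (-((1 / T ^ 2 : ℝ) : ℂ) * t ^ 2))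

lemma cexp_neg_mul_sq (b t : ℝ) : cexp (-(b : ℂ) * t ^ 2) = (Real.exp (-b * t ^ 2) : ℝ) := by
  push_cast; rfl

lemma gaussian_mul_norm_phaseIntegral_sq [SFinite μ] (t : ℝ) :
    ((Real.exp (-(1 / T ^ 2) * t ^ 2) * ‖phaseIntegral μ a θ t‖ ^ 2 : ℝ) : ℂ) =
      ∫ z, gaussianPhaseKernel a θ T t z ∂(μ.prod μ) := by
  have hfactor : ∀ z, gaussianPhaseKernel a θ T t z = cexp (-((1 / T ^ 2 : ℝ) : ℂ) * t ^ 2) *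
      (a z.1 * cexp (-(I * θ z.1 * t)) * conj (a z.2 * cexp (-(I * θ z.2 * t)))) := fun z => by
    rw [gaussianPhaseKernel, map_mul, ← exp_conj]
    simp only [map_neg, map_mul, conj_I, conj_ofReal]
    rw [show I * ((θ z.2 - θ z.1 : ℝ) : ℂ) * t = -(I * θ z.1 * t) + -(-I * θ z.2 * t) by
      push_cast; ring, exp_add]
    ring
  simp_rw [hfactor]
  rw [integral_const_mul, integral_prod_mul (fun x => a x * cexp (-(I * θ x * t)))
    (fun y => conj (a y * cexp (-(I * θ y * t)))), integral_conj, mul_conj, cexp_neg_mul_sq,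
    normSq_eq_norm_sq]
  push_cast
  rfl

lemma integrable_gaussianPhaseKernel [SFinite μ] (ha : Measurable a) (hθ : Measurable θ)
    (hai : Integrable a μ) (hT : 0 < T) :
    Integrable (Function.uncurry (gaussianPhaseKernel a θ T)) (volume.prod (μ.prod μ)) := by
  have hmeas : Measurable (Function.uncurry (gaussianPhaseKernel a θ T)) := by
    unfold gaussianPhaseKernel Function.uncurry
    fun_prop
  have hgauss : Integrable fun t : ℝ => Real.exp (-(1 / T ^ 2) * t ^ 2) :=
    integrable_exp_neg_mul_sq (by positivity)
  refine (hgauss.mul_prod (hai.norm.mul_prod hai.norm)).mono hmeas.aestronglyMeasurable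
    (.of_forall fun ⟨t, x, y⟩ => le_of_eq ?_)
  have hunit : ‖cexp (I * (θ y - θ x : ℝ) * t)‖ = 1 := by
    rw [show I * ((θ y - θ x : ℝ) : ℂ) * t = (((θ y - θ x) * t : ℝ) : ℂ) * I by push_cast; ring,
      norm_exp_ofReal_mul_I]
  simp only [Function.uncurry, gaussianPhaseKernel, norm_mul, hunit, cexp_neg_mul_sq, norm_real,
    norm_conj, norm_norm, one_mul]
  ring

lemma integral_gaussian_mul_norm_phaseIntegral_sq [SFinite μ] (ha : Measurable a)
    (hθ : Measurable θ) (hai : Integrable a μ) (hT : 0 < T) :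
    ((∫ t : ℝ, Real.exp (-(1 / T ^ 2) * t ^ 2) * ‖phaseIntegral μ a θ t‖ ^ 2 : ℝ) : ℂ) =
      (√Real.pi * T : ℝ) * ∫ z, a z.1 * conj (a z.2) *
        (Real.exp (-(T ^ 2 * (θ z.2 - θ z.1) ^ 2 / 4)) : ℝ) ∂(μ.prod μ) := by
  rw [← integral_complex_ofReal]
  simp_rw [gaussian_mul_norm_phaseIntegral_sq]
  rw [integral_integral_swap (integrable_gaussianPhaseKernel ha hθ hai hT), ← integral_const_mul]
  congr 1 with z
  simp only [gaussianPhaseKernel]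
  rw [integral_const_mul, integral_cexp_mul_gaussian hT, ofReal_mul]
  ring

lemma integrable_gaussian_mul_norm_phaseIntegral_sq [SFinite μ] (ha : Measurable a)
    (hθ : Measurable θ) (hai : Integrable a μ) (hT : 0 < T) :
    Integrable fun t : ℝ => Real.exp (-(1 / T ^ 2) * t ^ 2) * ‖phaseIntegral μ a θ t‖ ^ 2 := by
  have h := (integrable_gaussianPhaseKernel ha hθ hai hT).integral_prod_left
  simp only [Function.uncurry_apply_pair, ← gaussian_mul_norm_phaseIntegral_sq] at h
  exact h.re.congr (.of_forall fun t => ofReal_re _)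

lemma integral_gaussian_mul_norm_phaseIntegral_sq_le [SFinite μ] (ha : Measurable a)
    (hθ : Measurable θ) (hai : Integrable a μ) (ha2 : Integrable (fun x => ‖a x‖ ^ 2) μ)
    (hT : 0 < T) (hS : 0 ≤ S)
    (hθS : ∀ x, ∫⁻ y, ENNReal.ofReal (Real.exp (-(T ^ 2 * (θ y - θ x) ^ 2 / 4))) ∂μ ≤
      ENNReal.ofReal S) :
    ∫ t : ℝ, Real.exp (-(1 / T ^ 2) * t ^ 2) * ‖phaseIntegral μ a θ t‖ ^ 2 ≤
      √Real.pi * T * S * ∫ x, ‖a x‖ ^ 2 ∂μ := by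
  have hJ : 0 ≤ ∫ t : ℝ, Real.exp (-(1 / T ^ 2) * t ^ 2) * ‖phaseIntegral μ a θ t‖ ^ 2 :=
    integral_nonneg fun t => by positivity
  rw [← Real.norm_of_nonneg hJ, ← norm_real,
    integral_gaussian_mul_norm_phaseIntegral_sq ha hθ hai hT, norm_mul, norm_real,
    Real.norm_of_nonneg (by positivity), mul_assoc _ S]
  gcongr
  refine norm_integral_mul_conj_mul_kernel_le
    (k := fun x y => Real.exp (-(T ^ 2 * (θ y - θ x) ^ 2 / 4))) ha ha2
    (by unfold Function.uncurry; fun_prop) (fun x y => (Real.exp_pos _).le) (fun x y => ?_) hS hθS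
  rw [← neg_sub (θ y), neg_sq]

lemma intervalIntegral_norm_phaseIntegral_sq_le [SFinite μ] (ha : Measurable a)
    (hθ : Measurable θ) (hai : Integrable a μ) (ha2 : Integrable (fun x => ‖a x‖ ^ 2) μ)
    (hT : 0 < T) (hS : 0 ≤ S)
    (hθS : ∀ x, ∫⁻ y, ENNReal.ofReal (Real.exp (-(T ^ 2 * (θ y - θ x) ^ 2 / 4))) ∂μ ≤
      ENNReal.ofReal S) :
    ∫ t in -T..T, ‖phaseIntegral μ a θ t‖ ^ 2 ≤
      Real.exp 1 * (√Real.pi * T * S * ∫ x, ‖a x‖ ^ 2 ∂μ) := by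
  refine le_trans ?_ (mul_le_mul_of_nonneg_left
    (integral_gaussian_mul_norm_phaseIntegral_sq_le ha hθ hai ha2 hT hS hθS) (Real.exp_pos 1).le)
  have hint := (integrable_gaussian_mul_norm_phaseIntegral_sq ha hθ hai hT).const_mul (Real.exp 1)
  rw [intervalIntegral.integral_of_le (by linarith), ← integral_const_mul]
  refine (integral_mono_of_nonneg (.of_forall fun t => by positivity) hint.integrableOn ?_).trans
    (setIntegral_le_integral hint (.of_forall fun t => by positivity))
  refine (ae_restrict_iff' measurableSet_Ioc).2 (.of_forall fun t ht => ?_)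
  have hsq : 1 / T ^ 2 * t ^ 2 ≤ 1 := by
    rw [one_div_mul_eq_div]
    exact (div_le_one (by positivity)).2 (sq_le_sq' ht.1.le ht.2)
  have hexp : 1 ≤ Real.exp 1 * Real.exp (-(1 / T ^ 2) * t ^ 2) := by
    rw [← Real.exp_add]
    exact Real.one_le_exp (by linarith)
  simpa only [mul_assoc, one_mul] using
    mul_le_mul_of_nonneg_right hexp (sq_nonneg ‖phaseIntegral μ a θ t‖)

end GaussianMeanValue

section VerticalLine

variable {f : ℂ → ℂ} {σ : ℝ}

lemma re_add_mul_I (σ t : ℝ) : ((σ : ℂ) + t * I).re = σ := by simp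

lemma im_add_mul_I (σ t : ℝ) : ((σ : ℂ) + t * I).im = t := by simp

lemma continuous_comp_add_mul_I (hf : ∀ s : ℂ, s.re = σ → ContinuousAt f s) :
    Continuous fun t : ℝ => f (σ + t * I) :=
  continuous_iff_continuousAt.2 fun t =>
    ContinuousAt.comp (f := fun t : ℝ => (σ : ℂ) + t * I) (hf _ (re_add_mul_I σ t)) (by fun_prop)

lemma ne_of_re_ne {s z : ℂ} (h : s.re ≠ z.re) : s ≠ z := fun hs => h (hs ▸ rfl)

lemma continuous_riemannZeta_add_mul_I (hσ : σ ≠ 1) :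
    Continuous fun t : ℝ => riemannZeta (σ + t * I) :=
  continuous_comp_add_mul_I fun _ hs =>
    (differentiableAt_riemannZeta (ne_of_re_ne (hs.trans_ne hσ))).continuousAt

lemma continuous_deriv_riemannZeta_add_mul_I (hσ : σ ≠ 1) :
    Continuous fun t : ℝ => deriv riemannZeta (σ + t * I) :=
  continuous_comp_add_mul_I fun _ hs =>
    (differentiableAt_deriv_riemannZeta (ne_of_re_ne (hs.trans_ne hσ))).continuousAt

lemma continuous_fractTail_add_mul_I {X : ℝ} (hX : 0 < X) (hσ : 0 < σ) :
    Continuous fun t : ℝ => fractTail X (σ + t * I) :=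
  continuous_comp_add_mul_I fun _ hs =>
    (differentiableAt_fractTail hX (hs.symm ▸ hσ)).continuousAt

end VerticalLine

section DirichletPolynomial

open MeasureTheory

lemma summable_exp_neg_int_sq_div_four :
    Summable fun k : ℤ => Real.exp (-((k : ℝ) ^ 2 / 4)) := by
  have hsum : Summable fun k : ℤ => 4 * (1 / (k : ℝ) ^ 2) + if k = 0 then (1 : ℝ) else 0 :=
    ((Real.summable_one_div_int_pow.2 one_lt_two).mul_left 4).add (hasSum_ite_eq 0 1).summable
  refine hsum.of_nonneg_of_le (fun k => (Real.exp_pos _).le) fun k => ?_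
  rcases eq_or_ne k 0 with rfl | hk
  · simp
  · have _ : (0 : ℝ) < (k : ℝ) ^ 2 := by positivity
    rw [if_neg hk, add_zero, Real.exp_neg, mul_one_div, ← inv_div _ (4 : ℝ)]
    exact inv_anti₀ (by positivity) (by linarith [Real.add_one_le_exp ((k : ℝ) ^ 2 / 4)])

lemma sq_sub_le_sq_mul_sq_log_sub {N x y : ℕ} (hx : x < N) (hy : y < N) :
    ((y : ℝ) - x) ^ 2 ≤ (N : ℝ) ^ 2 * (Real.log (y + 1) - Real.log (x + 1)) ^ 2 := by
  wlog hxy : x ≤ y generalizing x y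
  · rw [← neg_sub (x : ℝ), neg_sq, ← neg_sub (Real.log (x + 1)), neg_sq]
    exact this hy hx (le_of_not_ge hxy)
  have hy' : (y : ℝ) + 1 ≤ N := by exact_mod_cast hy
  have hxy' : (x : ℝ) ≤ y := by exact_mod_cast hxy
  have hlog : ((y : ℝ) - x) / (y + 1) ≤ Real.log (y + 1) - Real.log (x + 1) := by
    rw [← Real.log_div (by positivity) (by positivity)]
    refine le_of_eq_of_le ?_ (Real.one_sub_inv_le_log_of_pos (by positivity))
    field_simp
    ring
  rw [← mul_pow]
  refine pow_le_pow_left₀ (sub_nonneg.2 hxy') ?_ 2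
  calc (y : ℝ) - x = (y + 1) * ((y - x) / (y + 1)) := by field_simp
    _ ≤ N * (Real.log (y + 1) - Real.log (x + 1)) := by gcongr

lemma sum_cpow_neg_eq_phaseIntegral (N : ℕ) (σ t : ℝ) :
    ∑ n ∈ range N, ((n : ℂ) + 1) ^ (-((σ : ℂ) + t * I)) =
      phaseIntegral (X := Fin N) .count (fun x => (((x : ℝ) + 1) ^ (-σ) : ℝ))
        (fun x => Real.log ((x : ℝ) + 1)) t := by
  rw [phaseIntegral, integral_count, Finset.sum_range]
  refine sum_congr rfl fun x _ => ?_
  have hx : (0 : ℝ) < (x : ℝ) + 1 := by positivity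
  have hx' : ((x : ℕ) : ℂ) + 1 ≠ 0 := by exact_mod_cast hx.ne'
  rw [Real.rpow_def_of_pos hx, cpow_def_of_ne_zero hx', ofReal_exp, ← Complex.exp_add]
  push_cast [ofReal_log hx.le]
  ring_nf

lemma sum_exp_neg_sq_log_sub_le (N : ℕ) (x : Fin N) :
    ∑ y : Fin N, Real.exp (-((N : ℝ) ^ 2 *
        (Real.log ((y : ℝ) + 1) - Real.log ((x : ℝ) + 1)) ^ 2 / 4)) ≤
      ∑' k : ℤ, Real.exp (-((k : ℝ) ^ 2 / 4)) := by
  let diff (y : Fin N) : ℤ := ((y : ℕ) : ℤ) - ((x : ℕ) : ℤ)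
  have hinj : Function.Injective diff := fun y z h => Fin.ext (by lia)
  calc _ ≤ ∑ y : Fin N, Real.exp (-((diff y : ℝ) ^ 2 / 4)) := by
        refine sum_le_sum fun y _ => Real.exp_le_exp.2 ?_
        push_cast [diff]
        linarith [sq_sub_le_sq_mul_sq_log_sub x.2 y.2]
    _ = ∑ k ∈ univ.image diff, Real.exp (-((k : ℝ) ^ 2 / 4)) := by
        rw [sum_image hinj.injOn]
    _ ≤ _ := summable_exp_neg_int_sq_div_four.sum_le_tsum _ fun k _ => (Real.exp_pos _).le

lemma sum_norm_rpow_neg_sq_le {σ : ℝ} (hσ : 1 / 2 ≤ σ) (N : ℕ) :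
    ∑ x : Fin N, ‖((((x : ℝ) + 1) ^ (-σ) : ℝ) : ℂ)‖ ^ 2 ≤ 1 + Real.log N := by
  refine le_trans ?_ (harmonic_le_one_add_log N)
  rw [harmonic, Finset.sum_range]
  push_cast
  refine sum_le_sum fun x _ => ?_
  have hx : (1 : ℝ) ≤ (x : ℝ) + 1 := by linarith [(x : ℕ).cast_nonneg (α := ℝ)]
  rw [norm_real, Real.norm_of_nonneg (by positivity), ← Real.rpow_natCast,
    ← Real.rpow_mul (by positivity), ← Real.rpow_neg_one]
  exact Real.rpow_le_rpow_of_exponent_le hx (by push_cast; linarith)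

lemma exists_integral_norm_sum_cpow_neg_sq_le :
    ∃ C > 0, ∀ N : ℕ, 1 ≤ N → ∀ σ : ℝ, 1 / 2 ≤ σ →
      ∫ t in -(N : ℝ)..N, ‖∑ n ∈ range N, ((n : ℂ) + 1) ^ (-((σ : ℂ) + t * I))‖ ^ 2 ≤
        C * N * (1 + Real.log N) := by
  set S := ∑' k : ℤ, Real.exp (-((k : ℝ) ^ 2 / 4))
  have hS : 0 < S := summable_exp_neg_int_sq_div_four.tsum_pos
    (fun k => (Real.exp_pos _).le) 0 (Real.exp_pos _)
  refine ⟨Real.exp 1 * (√Real.pi * S), by positivity, fun N hN σ hσ => ?_⟩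
  simp only [sum_cpow_neg_eq_phaseIntegral]
  have hN0 : (0 : ℝ) < N := by exact_mod_cast hN
  refine (intervalIntegral_norm_phaseIntegral_sq_le
    (measurable_of_finite _) (measurable_of_finite _) .of_finite
    .of_finite hN0 hS.le fun x => ?_).trans ?_
  · rw [lintegral_count, tsum_fintype,
      ← ENNReal.ofReal_sum_of_nonneg fun _ _ => (Real.exp_pos _).le]
    exact ENNReal.ofReal_le_ofReal (sum_exp_neg_sq_log_sub_le N x)
  · rw [integral_count]
    calc _ ≤ Real.exp 1 * (√Real.pi * N * S * (1 + Real.log N)) := by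
          gcongr
          exact sum_norm_rpow_neg_sq_le hσ N
      _ = _ := by ring

end DirichletPolynomial

section FractTailMeanSquare

open MeasureTheory Set

lemma fractTail_add_mul_I_eq_phaseIntegral {X : ℝ} (hX : 0 < X) (σ t : ℝ) :
    fractTail X (σ + t * I) = phaseIntegral (volume.restrict (Ioi (Real.log X)))
      (fun u => ((Int.fract (Real.exp u) * Real.exp (-σ * u) : ℝ) : ℂ)) id t := by
  have himage : Real.exp '' Ioi (Real.log X) = Ioi X := by
    rw [Real.image_exp_Ioi, Real.exp_log hX]
  rw [fractTail, phaseIntegral, ← himage, integral_image_eq_integral_abs_deriv_smul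
    measurableSet_Ioi (fun u _ => (Real.hasDerivAt_exp u).hasDerivWithinAt)
    Real.exp_injective.injOn]
  refine setIntegral_congr_fun measurableSet_Ioi fun u _ => ?_
  have hcpow : (Real.exp u : ℂ) ^ (-((σ : ℂ) + t * I) - 1) =
      cexp (-u) * (cexp (-σ * u) * cexp (-(I * u * t))) := by
    rw [cpow_def_of_ne_zero (by exact_mod_cast (Real.exp_pos u).ne'),
      ← ofReal_log (Real.exp_pos u).le, Real.log_exp, ← Complex.exp_add, ← Complex.exp_add]
    ring_nf
  have hcancel : (Real.exp u : ℂ) * cexp (-u) = 1 := by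
    rw [ofReal_exp, ← Complex.exp_add, add_neg_cancel, Complex.exp_zero]
  rw [abs_of_pos (Real.exp_pos u), real_smul, hcpow, id]
  push_cast at hcancel ⊢
  linear_combination
    ((Int.fract (Real.exp u) : ℝ) : ℂ) * cexp (-σ * u) * cexp (-(I * u * t)) * hcancel

lemma lintegral_exp_neg_sq_sub_le {T : ℝ} (hT : 0 < T) (s : Set ℝ) (x : ℝ) :
    ∫⁻ y in s, ENNReal.ofReal (Real.exp (-(T ^ 2 * (y - x) ^ 2 / 4))) ≤
      ENNReal.ofReal (2 * √Real.pi / T) := by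
  have hgauss (y : ℝ) :
      Real.exp (-(T ^ 2 * (y - x) ^ 2 / 4)) = Real.exp (-(T ^ 2 / 4) * (y - x) ^ 2) := by
    ring_nf
  have hint : Integrable fun y : ℝ => Real.exp (-(T ^ 2 / 4) * (y - x) ^ 2) :=
    (integrable_exp_neg_mul_sq (by positivity)).comp_sub_right x
  refine (setLIntegral_le_lintegral _ _).trans ?_
  simp only [hgauss]
  rw [← ofReal_integral_eq_lintegral_ofReal hint (.of_forall fun y => (Real.exp_pos _).le)]
  refine ENNReal.ofReal_le_ofReal (le_of_eq ?_)
  rw [integral_sub_right_eq_self (fun z : ℝ => Real.exp (-(T ^ 2 / 4) * z ^ 2)) x,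
    integral_gaussian, Real.sqrt_div Real.pi_pos.le, show T ^ 2 / 4 = (T / 2) ^ 2 by ring,
    Real.sqrt_sq (by positivity)]
  field_simp

lemma norm_fract_exp_mul_exp_le (r u : ℝ) :
    ‖((Int.fract (Real.exp u) * Real.exp (r * u) : ℝ) : ℂ)‖ ≤ Real.exp (r * u) := by
  rw [norm_real, Real.norm_of_nonneg (mul_nonneg (Int.fract_nonneg _) (Real.exp_pos _).le)]
  exact mul_le_of_le_one_left (Real.exp_pos _).le (Int.fract_lt_one _).le

lemma norm_fract_exp_mul_exp_sq_le (r u : ℝ) :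
    ‖((Int.fract (Real.exp u) * Real.exp (r * u) : ℝ) : ℂ)‖ ^ 2 ≤ Real.exp (2 * r * u) := by
  refine (pow_le_pow_left₀ (norm_nonneg _) (norm_fract_exp_mul_exp_le r u) 2).trans_eq ?_
  rw [← Real.exp_nat_mul]
  push_cast
  ring_nf

lemma integral_norm_fractTail_sq_le {N : ℕ} (hN : 1 ≤ N) {σ : ℝ} (hσ : 1 / 2 ≤ σ) :
    ∫ t in -(N : ℝ)..N, ‖fractTail N (σ + t * I)‖ ^ 2 ≤ 2 * Real.exp 1 * Real.pi / N := by
  have hN0 : (0 : ℝ) < N := by exact_mod_cast hN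
  simp only [fractTail_add_mul_I_eq_phaseIntegral hN0]
  set a : ℝ → ℂ := fun u => ((Int.fract (Real.exp u) * Real.exp (-σ * u) : ℝ) : ℂ)
  have ha : Measurable a :=
    ((measurable_fract.comp Real.measurable_exp).mul (by fun_prop)).complex_ofReal
  have hexp {r : ℝ} (hr : r < 0) : IntegrableOn (fun u => Real.exp (r * u)) (Ioi (Real.log N)) :=
    integrableOn_exp_mul_Ioi hr _
  have ha1 : IntegrableOn a (Ioi (Real.log N)) :=
    (hexp (by linarith)).mono' ha.aestronglyMeasurable (.of_forall (norm_fract_exp_mul_exp_le _))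
  have ha2 : IntegrableOn (fun u => ‖a u‖ ^ 2) (Ioi (Real.log N)) := by
    refine (hexp (r := 2 * -σ) (by linarith)).mono' (ha.norm.pow_const 2).aestronglyMeasurable
      (.of_forall fun u => ?_)
    rw [Real.norm_of_nonneg (by positivity)]
    exact norm_fract_exp_mul_exp_sq_le _ u
  have hnorm : ∫ u in Ioi (Real.log N), ‖a u‖ ^ 2 ≤ 1 / N := by
    refine (integral_mono ha2 (hexp (by linarith)) (norm_fract_exp_mul_exp_sq_le (-σ))).trans ?_
    rw [integral_exp_mul_Ioi (by linarith), mul_comm, ← Real.rpow_def_of_pos hN0, one_div,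
      ← Real.rpow_neg_one, neg_div, ← div_neg]
    refine (div_le_self (by positivity) (by linarith)).trans ?_
    exact Real.rpow_le_rpow_of_exponent_le (by exact_mod_cast hN) (by linarith)
  calc _ ≤ Real.exp 1 * (√Real.pi * N * (2 * √Real.pi / N) *
          ∫ u in Ioi (Real.log N), ‖a u‖ ^ 2) :=
        intervalIntegral_norm_phaseIntegral_sq_le ha measurable_id ha1 ha2 hN0 (by positivity)
          fun x => lintegral_exp_neg_sq_sub_le hN0 _ x
    _ ≤ Real.exp 1 * (√Real.pi * N * (2 * √Real.pi / N) * (1 / N)) := by gcongr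
    _ = 2 * Real.exp 1 * (√Real.pi * √Real.pi) / N := by field_simp
    _ = _ := by rw [Real.mul_self_sqrt Real.pi_pos.le]

end FractTailMeanSquare

section ZetaMoments

open MeasureTheory

variable {σ : ℝ} {N : ℕ}

lemma norm_cpow_div_sub_one_sq_le (hN : 1 ≤ N) (h1 : 1 / 2 ≤ σ) (h2 : σ ≤ 3 / 4) (t : ℝ) :
    ‖(N : ℂ) ^ (1 - ((σ : ℂ) + t * I)) / ((σ : ℂ) + t * I - 1)‖ ^ 2 ≤
      16 * N * (1 + t ^ 2)⁻¹ := by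
  have hN1 : (1 : ℝ) ≤ N := by exact_mod_cast hN
  have hnum : ‖(N : ℂ) ^ (1 - ((σ : ℂ) + t * I))‖ ^ 2 ≤ N := by
    rw [norm_natCast_cpow_of_pos hN, ← Real.rpow_natCast, ← Real.rpow_mul (by positivity)]
    refine (Real.rpow_le_rpow_of_exponent_le hN1 ?_).trans_eq (Real.rpow_one _)
    rw [sub_re, one_re, re_add_mul_I]
    push_cast
    linarith
  have hden : (1 + t ^ 2) / 16 ≤ ‖(σ : ℂ) + t * I - 1‖ ^ 2 := by
    have hsq : ‖(σ : ℂ) + t * I - 1‖ ^ 2 = (1 - σ) ^ 2 + t ^ 2 := by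
      rw [← normSq_eq_norm_sq, normSq_apply]
      simp
      ring
    nlinarith [sq_nonneg t]
  rw [norm_div, div_pow]
  calc _ ≤ (N : ℝ) / ((1 + t ^ 2) / 16) := by gcongr
    _ = _ := by field_simp

lemma integral_norm_cpow_div_sub_one_sq_le (hN : 1 ≤ N) (h1 : 1 / 2 ≤ σ) (h2 : σ ≤ 3 / 4) :
    ∫ t in -(N : ℝ)..N, ‖(N : ℂ) ^ (1 - ((σ : ℂ) + t * I)) / ((σ : ℂ) + t * I - 1)‖ ^ 2 ≤
      16 * Real.pi * N := by
  have hint : Integrable fun t : ℝ => 16 * (N : ℝ) * (1 + t ^ 2)⁻¹ :=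
    integrable_inv_one_add_sq.const_mul _
  rw [intervalIntegral.integral_of_le (by linarith [N.cast_nonneg (α := ℝ)])]
  calc _ ≤ ∫ t in Set.Ioc (-(N : ℝ)) N, 16 * (N : ℝ) * (1 + t ^ 2)⁻¹ :=
        integral_mono_of_nonneg (.of_forall fun t => by positivity) hint.integrableOn
          (.of_forall (norm_cpow_div_sub_one_sq_le hN h1 h2))
    _ ≤ ∫ t, 16 * (N : ℝ) * (1 + t ^ 2)⁻¹ :=
        setIntegral_le_integral hint (.of_forall fun t => by positivity)
    _ = _ := by
        rw [integral_const_mul, integral_univ_inv_one_add_sq]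
        ring

lemma norm_add_sub_sq_le {E : Type*} [SeminormedAddCommGroup E] (a b c : E) :
    ‖a + b - c‖ ^ 2 ≤ 3 * (‖a‖ ^ 2 + ‖b‖ ^ 2 + ‖c‖ ^ 2) := by
  have htri : ‖a + b - c‖ ≤ ‖a‖ + ‖b‖ + ‖c‖ :=
    (norm_sub_le _ _).trans (by gcongr; exact norm_add_le a b)
  refine (pow_le_pow_left₀ (norm_nonneg _) htri 2).trans ?_
  nlinarith [sq_nonneg (‖a‖ - ‖b‖), sq_nonneg (‖a‖ - ‖c‖), sq_nonneg (‖b‖ - ‖c‖)]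

lemma norm_riemannZeta_sq_le {t : ℝ} (hN : 1 ≤ N) (h1 : 1 / 2 ≤ σ) (h2 : σ ≤ 3 / 4)
    (ht : t ∈ Set.Icc (-(N : ℝ)) N) :
    ‖riemannZeta (σ + t * I)‖ ^ 2 ≤
      3 * (‖∑ n ∈ range N, ((n : ℂ) + 1) ^ (-((σ : ℂ) + t * I))‖ ^ 2 +
        ‖(N : ℂ) ^ (1 - ((σ : ℂ) + t * I)) / ((σ : ℂ) + t * I - 1)‖ ^ 2 +
        2 * N ^ 2 * ‖fractTail N (σ + t * I)‖ ^ 2) := by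
  have hN1 : (1 : ℝ) ≤ N := by exact_mod_cast hN
  have hs : ‖(σ : ℂ) + t * I‖ ^ 2 ≤ 2 * N ^ 2 := by
    rw [← normSq_eq_norm_sq, normSq_apply, re_add_mul_I, im_add_mul_I]
    nlinarith [ht.1, ht.2]
  rw [riemannZeta_eq_sum_add hN (by rw [re_add_mul_I]; linarith)
    (ne_of_re_ne (by rw [re_add_mul_I, one_re]; linarith))]
  refine (norm_add_sub_sq_le _ _ _).trans ?_
  rw [norm_mul, mul_pow]
  gcongr

theorem exists_integral_norm_riemannZeta_sq_le :
    ∃ C > 0, ∀ N : ℕ, 1 ≤ N → ∀ σ : ℝ, 1 / 2 ≤ σ → σ ≤ 3 / 4 →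
      ∫ t in -(N : ℝ)..N, ‖riemannZeta (σ + t * I)‖ ^ 2 ≤ C * N * (1 + Real.log N) := by
  obtain ⟨C, hC, hD⟩ := exists_integral_norm_sum_cpow_neg_sq_le
  refine ⟨3 * (C + 16 * Real.pi + 4 * Real.exp 1 * Real.pi), by positivity,
    fun N hN σ h1 h2 => ?_⟩
  have hN1 : (1 : ℝ) ≤ N := by exact_mod_cast hN
  have hlog : 0 ≤ Real.log N := Real.log_nonneg hN1
  have hNC : (N : ℂ) ≠ 0 := by exact_mod_cast (by lia : N ≠ 0)
  have intervalIntegrable_sq {f : ℝ → ℂ} (hf : Continuous f) :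
      IntervalIntegrable (fun t => ‖f t‖ ^ 2) volume (-(N : ℝ)) N :=
    (hf.norm.pow 2).intervalIntegrable _ _
  have hDint := intervalIntegrable_sq (f := fun t => ∑ n ∈ range N, _) <|
    continuous_finsetSum (range N) fun n _ => Continuous.const_cpow (b := (n : ℂ) + 1)
      (f := fun t : ℝ => -((σ : ℂ) + t * I)) (by fun_prop) (Or.inl n.cast_add_one_ne_zero)
  have hPint := intervalIntegrable_sq <|
    (Continuous.const_cpow (f := fun t : ℝ => 1 - ((σ : ℂ) + t * I)) (by fun_prop) (Or.inl hNC)).div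
      (g := fun t : ℝ => (σ : ℂ) + t * I - 1) (by fun_prop) fun t =>
        sub_ne_zero.2 (ne_of_re_ne (by rw [re_add_mul_I, one_re]; linarith))
  have hRint := (intervalIntegrable_sq <|
    continuous_fractTail_add_mul_I (X := N) (σ := σ) (by linarith) (by linarith)).const_mul
      (2 * (N : ℝ) ^ 2)
  have hsplit := intervalIntegral.integral_mono_on (by linarith)
    (intervalIntegrable_sq (continuous_riemannZeta_add_mul_I (by linarith)))
    (((hDint.add hPint).add hRint).const_mul 3) fun t => norm_riemannZeta_sq_le hN h1 h2
  rw [intervalIntegral.integral_const_mul, intervalIntegral.integral_add (hDint.add hPint) hRint,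
    intervalIntegral.integral_add hDint hPint, intervalIntegral.integral_const_mul] at hsplit
  calc _ ≤ 3 * (C * N * (1 + Real.log N) + 16 * Real.pi * N +
          2 * N ^ 2 * (2 * Real.exp 1 * Real.pi / N)) := by
        refine hsplit.trans ?_
        gcongr
        exacts [hD N hN σ h1, integral_norm_cpow_div_sub_one_sq_le hN h1 h2,
          integral_norm_fractTail_sq_le hN h1]
    _ = 3 * (C * N * (1 + Real.log N) + (16 * Real.pi + 4 * Real.exp 1 * Real.pi) * (N * 1)) := by
        field_simp
        ring
    _ ≤ 3 * (C * N * (1 + Real.log N) +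
          (16 * Real.pi + 4 * Real.exp 1 * Real.pi) * (N * (1 + Real.log N))) := by
        gcongr
        linarith
    _ = _ := by ring

-- AM-GM in the form `f ≤ l / 2 + f ^ 2 / (2 * l)`.
lemma intervalIntegral_le_add_integral_sq {f : ℝ → ℝ} (hf : Continuous f) {a b l : ℝ}
    (hab : a ≤ b) (hl : 0 < l) :
    ∫ t in a..b, f t ≤ (b - a) * (l / 2) + 1 / (2 * l) * ∫ t in a..b, f t ^ 2 := by
  have hf2 : IntervalIntegrable (fun t => 1 / (2 * l) * f t ^ 2) volume a b :=
    ((hf.pow 2).intervalIntegrable a b).const_mul _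
  have hmono := intervalIntegral.integral_mono_on hab (hf.intervalIntegrable a b)
    (intervalIntegrable_const.add hf2) (fun t _ => show f t ≤ l / 2 + 1 / (2 * l) * f t ^ 2 by
      have hsq : l / 2 + 1 / (2 * l) * f t ^ 2 - f t = (l - f t) ^ 2 / (2 * l) := by
        field_simp
        ring
      rw [← sub_nonneg, hsq]
      positivity)
  rwa [intervalIntegral.integral_add intervalIntegrable_const hf2,
    intervalIntegral.integral_const_mul, intervalIntegral.integral_const, smul_eq_mul] at hmono

theorem exists_integral_norm_riemannZeta_le :
    ∃ C > 0, ∀ N : ℕ, 1 ≤ N → ∀ σ : ℝ, 1 / 2 ≤ σ → σ ≤ 3 / 4 →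
      ∫ t in -(N : ℝ)..N, ‖riemannZeta (σ + t * I)‖ ≤ C * N * √(1 + Real.log N) := by
  obtain ⟨C, hC, h⟩ := exists_integral_norm_riemannZeta_sq_le
  refine ⟨1 + C / 2, by positivity, fun N hN σ h1 h2 => ?_⟩
  have hlog : 0 ≤ Real.log N := Real.log_nonneg (by exact_mod_cast hN)
  set l := √(1 + Real.log N)
  have hl0 : 0 < l := Real.sqrt_pos.2 (by linarith)
  have hl2 : 1 + Real.log N = l ^ 2 := (Real.sq_sqrt (by linarith)).symm
  calc _ ≤ ((N : ℝ) - -N) * (l / 2) +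
          1 / (2 * l) * ∫ t in -(N : ℝ)..N, ‖riemannZeta (σ + t * I)‖ ^ 2 :=
        intervalIntegral_le_add_integral_sq
          (continuous_riemannZeta_add_mul_I (by linarith)).norm
          (by linarith [N.cast_nonneg (α := ℝ)]) hl0
    _ ≤ ((N : ℝ) - -N) * (l / 2) + 1 / (2 * l) * (C * N * l ^ 2) := by
        gcongr
        exact hl2 ▸ h N hN σ h1 h2
    _ = _ := by
        field_simp
        ring

end ZetaMoments

section DerivativeMoment

open MeasureTheory

lemma norm_deriv_le_circleAverage {f : ℂ → ℂ} {c : ℂ} {r : ℝ} (hr : 0 < r)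
    (hf : DifferentiableOn ℂ f (Metric.closedBall c r)) :
    ‖deriv f c‖ ≤ r⁻¹ * Real.circleAverage (fun s => ‖f s‖) c r := by
  have hnorm : ‖∮ z in C(c, r), (1 / (z - c) ^ 2) • f z‖ ≤
      r⁻¹ * ∫ θ in 0..2 * Real.pi, ‖f (circleMap c r θ)‖ := by
    refine (intervalIntegral.norm_integral_le_integral_norm Real.two_pi_pos.le).trans_eq ?_
    rw [← intervalIntegral.integral_const_mul]
    refine intervalIntegral.integral_congr fun θ _ => ?_
    simp only [deriv_circleMap, norm_smul, norm_mul, norm_I, norm_circleMap_zero,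
      circleMap_sub_center, norm_div, norm_one, norm_pow, abs_of_pos hr]
    field_simp
  have h2πI : ‖(2 * Real.pi * I : ℂ)‖ = 2 * Real.pi := by simp [abs_of_pos Real.pi_pos]
  rw [hf.deriv_eq_smul_circleIntegral hr, norm_smul, h2πI] at hnorm
  rw [Real.circleAverage_def, smul_eq_mul, mul_left_comm]
  exact (le_inv_mul_iff₀ Real.two_pi_pos).2 hnorm

lemma circleMap_add_mul_I (σ t r θ : ℝ) : circleMap ((σ : ℂ) + t * I) r θ =
    ((σ + r * Real.cos θ : ℝ) : ℂ) + ((t + r * Real.sin θ : ℝ) : ℂ) * I := by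
  rw [circleMap, exp_mul_I]
  push_cast
  ring

lemma intervalIntegral_circleAverage_le {g : ℂ → ℝ} {σ r T B : ℝ}
    (hcont : Continuous fun p : ℝ × ℝ => g (circleMap ((σ : ℂ) + p.1 * I) r p.2))
    (hB : ∀ θ, ∫ t in -T..T, g (circleMap ((σ : ℂ) + t * I) r θ) ≤ B) :
    ∫ t in -T..T, Real.circleAverage g (σ + t * I) r ≤ B := by
  have hint : IntegrableOn
      (Function.uncurry fun t θ : ℝ => g (circleMap ((σ : ℂ) + t * I) r θ))
      (Set.uIoc (-T) T ×ˢ Set.uIoc 0 (2 * Real.pi)) :=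
    (hcont.continuousOn.integrableOn_compact (isCompact_uIcc.prod isCompact_uIcc)).mono_set
      (Set.prod_mono Set.uIoc_subset_uIcc Set.uIoc_subset_uIcc)
  simp only [Real.circleAverage_def, smul_eq_mul]
  rw [intervalIntegral.integral_const_mul, intervalIntegral_intervalIntegral_swap hint,
    inv_mul_le_iff₀ Real.two_pi_pos]
  have hθ : Continuous fun θ : ℝ => ∫ t in -T..T, g (circleMap ((σ : ℂ) + t * I) r θ) :=
    intervalIntegral.continuous_parametric_intervalIntegral_of_continuous'
      (f := fun θ t : ℝ => g (circleMap ((σ : ℂ) + t * I) r θ)) (hcont.comp continuous_swap) _ _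
  refine (intervalIntegral.integral_mono_on Real.two_pi_pos.le (hθ.intervalIntegrable _ _)
    intervalIntegrable_const fun θ _ => hB θ).trans_eq ?_
  rw [intervalIntegral.integral_const, smul_eq_mul, sub_zero]

lemma integral_norm_circleMap_le {f : ℂ → ℂ} {σ r T B : ℝ} (hr : 0 ≤ r) (hT : 0 ≤ T)
    (hf : ∀ s : ℂ, |s.re - σ| ≤ r → ContinuousAt f s)
    (hB : ∀ x : ℝ, |x - σ| ≤ r → ∫ t in -(T + r)..(T + r), ‖f (x + t * I)‖ ≤ B) (θ : ℝ) :
    ∫ t in -T..T, ‖f (circleMap ((σ : ℂ) + t * I) r θ)‖ ≤ B := by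
  have hsin : |r * Real.sin θ| ≤ r := by
    rw [abs_mul, abs_of_nonneg hr]
    exact mul_le_of_le_one_right hr (Real.abs_sin_le_one θ)
  have hcos : |σ + r * Real.cos θ - σ| ≤ r := by
    rw [add_sub_cancel_left, abs_mul, abs_of_nonneg hr]
    exact mul_le_of_le_one_right hr (Real.abs_cos_le_one θ)
  obtain ⟨hlow, hupp⟩ := abs_le.1 hsin
  have hcont := (continuous_comp_add_mul_I fun s hs => hf s (hs ▸ hcos)).norm
  simp only [circleMap_add_mul_I]
  rw [intervalIntegral.integral_comp_add_right
    (fun t : ℝ => ‖f (((σ + r * Real.cos θ : ℝ) : ℂ) + (t : ℂ) * I)‖) (r * Real.sin θ)]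
  refine (intervalIntegral.integral_mono_interval (by linarith) (by linarith) (by linarith)
    (.of_forall fun t => norm_nonneg _) (hcont.intervalIntegrable _ _)).trans (hB _ hcos)

theorem integral_norm_deriv_le {f : ℂ → ℂ} {σ r T B : ℝ} (hr : 0 < r) (hT : 0 ≤ T)
    (hf : ∀ s : ℂ, |s.re - σ| ≤ r → DifferentiableAt ℂ f s)
    (hB : ∀ x : ℝ, |x - σ| ≤ r → ∫ t in -(T + r)..(T + r), ‖f (x + t * I)‖ ≤ B) :
    ∫ t in -T..T, ‖deriv f (σ + t * I)‖ ≤ B / r := by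
  have hball (t : ℝ) {s : ℂ} (hs : s ∈ Metric.closedBall ((σ : ℂ) + t * I) r) :
      DifferentiableAt ℂ f s := by
    refine hf s ?_
    rw [← re_add_mul_I σ t, ← sub_re]
    exact (abs_re_le_norm _).trans (mem_closedBall_iff_norm.1 hs)
  have hcont : Continuous fun p : ℝ × ℝ => ‖f (circleMap ((σ : ℂ) + p.1 * I) r p.2)‖ := by
    refine Continuous.norm (continuous_iff_continuousAt.2 fun p => ?_)
    refine ContinuousAt.comp (f := fun p : ℝ × ℝ => circleMap ((σ : ℂ) + p.1 * I) r p.2) (g := f)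
      (hball p.1 (circleMap_mem_closedBall _ hr.le _)).continuousAt ?_
    unfold circleMap
    fun_prop
  have havg : Continuous fun t : ℝ =>
      r⁻¹ * Real.circleAverage (fun s => ‖f s‖) ((σ : ℂ) + t * I) r := by
    simp only [Real.circleAverage_def, smul_eq_mul]
    exact continuous_const.mul (continuous_const.mul
      (intervalIntegral.continuous_parametric_intervalIntegral_of_continuous'
        (f := fun t θ : ℝ => ‖f (circleMap ((σ : ℂ) + t * I) r θ)‖) hcont _ _))
  calc _ ≤ ∫ t in -T..T, r⁻¹ * Real.circleAverage (fun s => ‖f s‖) (σ + t * I) r := by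
        simp only [intervalIntegral.integral_of_le (by linarith : -T ≤ T)]
        exact integral_mono_of_nonneg (.of_forall fun t => norm_nonneg _)
          (havg.intervalIntegrable (-T) T).1 (.of_forall fun t =>
            norm_deriv_le_circleAverage hr fun s hs => (hball t hs).differentiableWithinAt)
    _ ≤ r⁻¹ * B := by
        rw [intervalIntegral.integral_const_mul]
        gcongr
        exact intervalIntegral_circleAverage_le hcont
          (integral_norm_circleMap_le hr.le hT (fun s hs => (hf s hs).continuousAt) hB)
    _ = B / r := inv_mul_eq_div r B

theorem exists_integral_norm_deriv_riemannZeta_le :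
    ∃ C > 0, ∀ N : ℕ, 1 ≤ N → ∀ α : ℝ, 0 < α → α ≤ 1 / 8 →
      ∫ t in -(N : ℝ)..N, ‖deriv riemannZeta (((1 / 2 + α : ℝ) : ℂ) + t * I)‖ ≤
        C / α * N * √(1 + Real.log (N + 1)) := by
  obtain ⟨C, hC, h⟩ := exists_integral_norm_riemannZeta_le
  refine ⟨4 * C, by positivity, fun N hN α hα hα' => ?_⟩
  have hN1 : (1 : ℝ) ≤ N := by exact_mod_cast hN
  have hbound (x : ℝ) (hx : |x - (1 / 2 + α)| ≤ α / 2) :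
      ∫ t in -((N : ℝ) + α / 2)..(N + α / 2), ‖riemannZeta (x + t * I)‖ ≤
        C * (2 * N) * √(1 + Real.log (N + 1)) := by
    obtain ⟨hx1, hx2⟩ := abs_le.1 hx
    calc _ ≤ ∫ t in -((N + 1 : ℕ) : ℝ)..(N + 1 : ℕ), ‖riemannZeta (x + t * I)‖ := by
          push_cast
          exact intervalIntegral.integral_mono_interval (by linarith) (by linarith) (by linarith)
            (.of_forall fun t => norm_nonneg _)
            ((continuous_riemannZeta_add_mul_I (by linarith)).norm.intervalIntegrable _ _)
      _ ≤ C * (N + 1 : ℕ) * √(1 + Real.log (N + 1 : ℕ)) :=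
          h (N + 1) (by lia) x (by linarith) (by linarith)
      _ ≤ _ := by
          push_cast
          gcongr
          linarith
  refine (integral_norm_deriv_le (half_pos hα) (by linarith) (fun s hs => ?_) hbound).trans_eq ?_
  · refine differentiableAt_riemannZeta (ne_of_re_ne ?_)
    rw [one_re]
    linarith [(abs_le.1 hs).2]
  · field_simp
    ring

end DerivativeMoment

section WeightedMoment

open MeasureTheory

lemma integral_div_one_add_abs_le_add {f : ℝ → ℝ} (hf : Continuous f) (hf0 : ∀ t, 0 ≤ f t) {b : ℝ}
    (hb : 0 < b) :
    ∫ t in -(2 * b)..2 * b, f t / (1 + |t|) ≤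
      (∫ t in -b..b, f t / (1 + |t|)) + 1 / b * ∫ t in -(2 * b)..2 * b, f t := by
  have hg : Continuous fun t => f t / (1 + |t|) :=
    hf.div (by fun_prop) fun t => by positivity
  have hf_int (x y : ℝ) : IntervalIntegrable f volume x y := hf.intervalIntegrable x y
  have hg_int (x y : ℝ) : IntervalIntegrable (fun t => f t / (1 + |t|)) volume x y :=
    hg.intervalIntegrable x y
  have shell {x y : ℝ} (hxy : x ≤ y) (h : ∀ t ∈ Set.Icc x y, b ≤ |t|) :
      ∫ t in x..y, f t / (1 + |t|) ≤ 1 / b * ∫ t in x..y, f t := by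
    rw [← intervalIntegral.integral_const_mul]
    refine intervalIntegral.integral_mono_on hxy (hg_int x y) ((hf_int x y).const_mul _)
      fun t ht => ?_
    rw [one_div_mul_eq_div]
    exact div_le_div_of_nonneg_left (hf0 t) hb (by linarith [h t ht])
  have hleft := shell (x := -(2 * b)) (y := -b) (by linarith)
    fun t ht => by linarith [neg_le_abs t, ht.2]
  have hright := shell (x := b) (y := 2 * b) (by linarith) fun t ht => ht.1.trans (le_abs_self t)
  have hmid : 0 ≤ 1 / b * ∫ t in -b..b, f t :=
    mul_nonneg (by positivity) (intervalIntegral.integral_nonneg (by linarith) fun t _ => hf0 t)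
  rw [← intervalIntegral.integral_add_adjacent_intervals (hf_int (-(2 * b)) (-b))
      (hf_int (-b) (2 * b)),
    ← intervalIntegral.integral_add_adjacent_intervals (hf_int (-b) b) (hf_int b (2 * b)),
    ← intervalIntegral.integral_add_adjacent_intervals (hg_int (-(2 * b)) (-b))
      (hg_int (-b) (2 * b)),
    ← intervalIntegral.integral_add_adjacent_intervals (hg_int (-b) b) (hg_int b (2 * b))]
  linarith

lemma integral_div_one_add_abs_le_of_dyadic {f : ℝ → ℝ} (hf : Continuous f) (hf0 : ∀ t, 0 ≤ f t)
    {B : ℝ} (K : ℕ) (hB : ∀ k ≤ K, ∫ t in -((2 : ℝ) ^ k)..2 ^ k, f t ≤ B * 2 ^ k) :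
    ∫ t in -((2 : ℝ) ^ K)..2 ^ K, f t / (1 + |t|) ≤ B * (1 + 2 * K) := by
  induction K with
  | zero =>
    have hB0 : ∫ t in -1..1, f t ≤ B := by simpa using hB 0 le_rfl
    have hg : Continuous fun t => f t / (1 + |t|) :=
      hf.div (by fun_prop) fun t => by positivity
    simp only [pow_zero, Nat.cast_zero, mul_zero, add_zero, mul_one]
    exact (intervalIntegral.integral_mono_on (by norm_num) (hg.intervalIntegrable _ _)
      (hf.intervalIntegrable _ _) fun t _ =>
        div_le_self (hf0 t) (by linarith [abs_nonneg t])).trans hB0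
  | succ K ih =>
    have hstep := integral_div_one_add_abs_le_add hf hf0 (b := 2 ^ K) (by positivity)
    rw [← pow_succ'] at hstep
    calc _ ≤ B * (1 + 2 * K) + 1 / 2 ^ K * (B * 2 ^ (K + 1)) := by
          refine hstep.trans ?_
          gcongr
          exacts [ih fun k hk => hB k (hk.trans K.le_succ), hB _ le_rfl]
      _ = _ := by
          push_cast
          field_simp
          ring

lemma one_le_log_add_five {V : ℝ} (hV : 0 ≤ V) : 1 ≤ Real.log (V + 5) := by
  simpa [abs_of_nonneg hV] using one_le_log_abs_add_five V

lemma log_two_mul_add_five_le {V : ℝ} (hV : 0 ≤ V) :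
    Real.log (2 * V + 5) ≤ 2 * Real.log (V + 5) := by
  rw [two_mul (Real.log _), ← Real.log_mul (by positivity) (by positivity)]
  exact Real.log_le_log (by positivity) (by nlinarith)

lemma log_le_two_mul_log_add_five {x V : ℝ} (hx : 0 < x) (hxV : x ≤ 2 * V + 5) (hV : 0 ≤ V) :
    Real.log x ≤ 2 * Real.log (V + 5) :=
  (Real.log_le_log hx hxV).trans (log_two_mul_add_five_le hV)

lemma sqrt_one_add_log_le {x V : ℝ} (hx : 0 < x) (hxV : x ≤ 2 * V + 5) (hV : 0 ≤ V) :
    √(1 + Real.log x) ≤ 2 * √(Real.log (V + 5)) := by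
  have hlog := log_le_two_mul_log_add_five hx hxV hV
  have hone := one_le_log_add_five hV
  rw [Real.sqrt_le_left (by positivity), mul_pow, Real.sq_sqrt (by linarith)]
  linarith

/-- The majorant `|ζ'(s)| + log(|Im s| + 5) |ζ(s)|` that controls
`(ζ'/ζ)^{(n)}(s) ζ(s)` to the right of the critical line. -/
noncomputable def zetaMajorant (s : ℂ) : ℝ :=
  ‖deriv riemannZeta s‖ + Real.log (|s.im| + 5) * ‖riemannZeta s‖

lemma zetaMajorant_nonneg (s : ℂ) : 0 ≤ zetaMajorant s := by
  have hlog := one_le_log_abs_add_five s.im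
  unfold zetaMajorant
  positivity

lemma continuous_zetaMajorant_add_mul_I {σ : ℝ} (hσ : σ ≠ 1) :
    Continuous fun t : ℝ => zetaMajorant (σ + t * I) := by
  simp only [zetaMajorant, im_add_mul_I]
  exact (continuous_deriv_riemannZeta_add_mul_I hσ).norm.add
    ((Continuous.log (by fun_prop) fun t => by positivity).mul
      (continuous_riemannZeta_add_mul_I hσ).norm)

lemma exists_integral_zetaMajorant_le :
    ∃ C > 0, ∀ α : ℝ, 0 < α → α ≤ 1 / 8 → ∀ V : ℝ, 0 ≤ V → ∀ N : ℕ, 1 ≤ N → N ≤ 2 * V →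
      ∫ t in -(N : ℝ)..N, zetaMajorant (((1 / 2 + α : ℝ) : ℂ) + t * I) ≤
        C * (1 / α + Real.log (V + 5)) * √(Real.log (V + 5)) * N := by
  obtain ⟨C₁, hC₁, hζ⟩ := exists_integral_norm_riemannZeta_le
  obtain ⟨C₂, hC₂, hζ'⟩ := exists_integral_norm_deriv_riemannZeta_le
  refine ⟨2 * C₂ + 4 * C₁, by positivity, fun α hα hα' V hV N hN hNV => ?_⟩
  have hN1 : (1 : ℝ) ≤ N := by exact_mod_cast hN
  have hl := one_le_log_add_five hV
  set l := Real.log (V + 5)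
  have hζ'_int := (continuous_deriv_riemannZeta_add_mul_I (σ := 1 / 2 + α)
    (by linarith)).norm.intervalIntegrable (μ := volume) (-(N : ℝ)) N
  have hζ_int := (continuous_riemannZeta_add_mul_I (σ := 1 / 2 + α)
    (by linarith)).norm.intervalIntegrable (μ := volume) (-(N : ℝ)) N
  have hmono := intervalIntegral.integral_mono_on (by linarith)
    ((continuous_zetaMajorant_add_mul_I (σ := 1 / 2 + α) (by linarith)).intervalIntegrable _ _)
    (hζ'_int.add (hζ_int.const_mul (2 * l))) fun t ht => by
      rw [zetaMajorant, im_add_mul_I]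
      gcongr
      exact log_le_two_mul_log_add_five (by positivity) (by linarith [abs_le.2 ht]) hV
  rw [intervalIntegral.integral_add hζ'_int (hζ_int.const_mul _),
    intervalIntegral.integral_const_mul] at hmono
  calc _ ≤ C₂ / α * N * (2 * √l) + 2 * l * (C₁ * N * (2 * √l)) := by
        refine hmono.trans (add_le_add ((hζ' N hN α hα hα').trans ?_)
          (mul_le_mul_of_nonneg_left ((hζ N hN _ (by linarith) (by linarith)).trans ?_)
            (by positivity)))
        · gcongr
          exact sqrt_one_add_log_le (by positivity) (by linarith) hV
        · gcongr
          exact sqrt_one_add_log_le (by positivity) (by linarith) hV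
    _ = (2 * C₂ * (1 / α) + 4 * C₁ * l) * √l * N := by ring
    _ ≤ (2 * C₂ * (1 / α + l) + 4 * C₁ * (1 / α + l)) * √l * N := by
        gcongr
        · linarith
        · linarith [one_div_pos.2 hα]
    _ = _ := by ring

theorem exists_integral_zetaMajorant_div_le :
    ∃ C > 0, ∀ α : ℝ, 0 < α → α ≤ 1 / 8 → ∀ V : ℝ, 1 ≤ V →
      ∫ t in -V..V, zetaMajorant (((1 / 2 + α : ℝ) : ℂ) + t * I) / (1 + |t|) ≤
        C * (1 / α + Real.log (V + 5)) * √(Real.log (V + 5)) * Real.log (V + 5) := by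
  obtain ⟨C, hC, hmoment⟩ := exists_integral_zetaMajorant_le
  refine ⟨9 * C, by positivity, fun α hα hα' V hV => ?_⟩
  have hl := one_le_log_add_five (zero_le_one.trans hV)
  set l := Real.log (V + 5)
  obtain ⟨n, hnV, hVn⟩ := exists_nat_pow_near hV one_lt_two
  have hK : (2 : ℝ) ^ (n + 1) ≤ 2 * V := by
    rw [pow_succ']
    linarith
  have hKl : ((n + 1 : ℕ) : ℝ) ≤ 4 * l := by
    have hlog : ((n + 1 : ℕ) : ℝ) * Real.log 2 ≤ 2 * l := by
      rw [← Real.log_pow]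
      exact log_le_two_mul_log_add_five (by positivity) (by linarith) (by linarith)
    nlinarith [Real.log_two_gt_d9, (n + 1).cast_nonneg (α := ℝ)]
  have hcont := continuous_zetaMajorant_add_mul_I (σ := 1 / 2 + α) (by linarith)
  have hdyadic := integral_div_one_add_abs_le_of_dyadic hcont (fun t => zetaMajorant_nonneg _)
    (B := C * (1 / α + l) * √l) (n + 1) fun k hk => by
      have h2k : (2 : ℝ) ^ k ≤ 2 ^ (n + 1) := pow_le_pow_right₀ one_le_two hk
      simpa using hmoment α hα hα' V (by linarith) (2 ^ k) Nat.one_le_two_pow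
        (by push_cast; linarith)
  calc _ ≤ ∫ t in -((2 : ℝ) ^ (n + 1))..2 ^ (n + 1),
          zetaMajorant (((1 / 2 + α : ℝ) : ℂ) + t * I) / (1 + |t|) :=
        intervalIntegral.integral_mono_interval (by linarith) (by linarith) hVn.le
          (.of_forall fun t => div_nonneg (zetaMajorant_nonneg _) (by positivity))
          ((hcont.div (by fun_prop) fun t => by positivity).intervalIntegrable _ _)
    _ ≤ C * (1 / α + l) * √l * (1 + 2 * (n + 1 : ℕ)) := hdyadic
    _ ≤ C * (1 / α + l) * √l * (9 * l) := by
        gcongr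
        linarith
    _ = _ := by ring

end WeightedMoment

section RectangleIntegral

open MeasureTheory

open scoped Interval

variable {z w p : ℂ} {f g F : ℂ → ℂ} {x y u v : ℝ}

/-- The four sides of the rectangle with opposite corners `z` and `w`. -/
def rectangleBorder (z w : ℂ) : Set ℂ :=
  [[z.re, w.re]] ×ℂ {z.im, w.im} ∪ {z.re, w.re} ×ℂ [[z.im, w.im]]

/-- The integral of `f` around the rectangle with opposite corners `z` and `w`, counterclockwise
when `z` is the lower left corner. -/
noncomputable def rectangleIntegral (z w : ℂ) (f : ℂ → ℂ) : ℂ :=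
  (∫ x : ℝ in z.re..w.re, f (x + z.im * I)) - (∫ x : ℝ in z.re..w.re, f (x + w.im * I))
    + I * (∫ y : ℝ in z.im..w.im, f (w.re + y * I)) - I * ∫ y : ℝ in z.im..w.im, f (z.re + y * I)

lemma add_mul_I_mem_rectangleBorder_of_im (hv : v = z.im ∨ v = w.im) (hx : x ∈ [[z.re, w.re]]) :
    (x + v * I : ℂ) ∈ rectangleBorder z w := by
  refine Or.inl ⟨?_, ?_⟩
  · simpa using hx
  · simpa using hv

lemma add_mul_I_mem_rectangleBorder_of_re (hu : u = z.re ∨ u = w.re) (hy : y ∈ [[z.im, w.im]]) :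
    (u + y * I : ℂ) ∈ rectangleBorder z w := by
  refine Or.inr ⟨?_, ?_⟩
  · simpa using hu
  · simpa using hy

lemma ne_of_mem_rectangleBorder {s : ℂ} (hp : p ∈ Set.Ioo z.re w.re ×ℂ Set.Ioo z.im w.im)
    (hs : s ∈ rectangleBorder z w) : s ≠ p := by
  rintro rfl
  obtain ⟨⟨hre₁, hre₂⟩, him₁, him₂⟩ := hp
  rcases hs with ⟨-, h | h⟩ | ⟨h | h, -⟩
  · exact him₁.ne' h
  · exact him₂.ne h
  · exact hre₁.ne' h
  · exact hre₂.ne h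

lemma rectangleBorder_subset : rectangleBorder z w ⊆ Rectangle z w := by
  rintro s (⟨hre, him⟩ | ⟨hre, him⟩)
  · refine ⟨hre, ?_⟩
    rcases him with h | h <;> simp [Set.mem_preimage, show s.im = _ from h]
  · refine ⟨?_, him⟩
    rcases hre with h | h <;> simp [Set.mem_preimage, show s.re = _ from h]

lemma intervalIntegrable_horizontalSide (hf : ContinuousOn f (rectangleBorder z w))
    (hv : v = z.im ∨ v = w.im) :
    IntervalIntegrable (fun x : ℝ => f (x + v * I)) volume z.re w.re :=
  (hf.comp (by fun_prop) fun _ => add_mul_I_mem_rectangleBorder_of_im hv).intervalIntegrable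

lemma intervalIntegrable_verticalSide (hf : ContinuousOn f (rectangleBorder z w))
    (hu : u = z.re ∨ u = w.re) :
    IntervalIntegrable (fun y : ℝ => f (u + y * I)) volume z.im w.im :=
  (hf.comp (by fun_prop) fun _ => add_mul_I_mem_rectangleBorder_of_re hu).intervalIntegrable

lemma rectangleIntegral_congr (h : Set.EqOn f g (rectangleBorder z w)) :
    rectangleIntegral z w f = rectangleIntegral z w g := by
  have horizontal {v : ℝ} (hv : v = z.im ∨ v = w.im) :
      ∫ x : ℝ in z.re..w.re, f (x + v * I) = ∫ x : ℝ in z.re..w.re, g (x + v * I) :=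
    intervalIntegral.integral_congr fun x hx => h (add_mul_I_mem_rectangleBorder_of_im hv hx)
  have vertical {u : ℝ} (hu : u = z.re ∨ u = w.re) :
      ∫ y : ℝ in z.im..w.im, f (u + y * I) = ∫ y : ℝ in z.im..w.im, g (u + y * I) :=
    intervalIntegral.integral_congr fun y hy => h (add_mul_I_mem_rectangleBorder_of_re hu hy)
  rw [rectangleIntegral, rectangleIntegral, horizontal (.inl rfl), horizontal (.inr rfl),
    vertical (.inl rfl), vertical (.inr rfl)]

lemma rectangleIntegral_add (hf : ContinuousOn f (rectangleBorder z w))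
    (hg : ContinuousOn g (rectangleBorder z w)) :
    rectangleIntegral z w (fun s => f s + g s) =
      rectangleIntegral z w f + rectangleIntegral z w g := by
  simp only [rectangleIntegral]
  rw [intervalIntegral.integral_add (intervalIntegrable_horizontalSide hf (.inl rfl))
      (intervalIntegrable_horizontalSide hg (.inl rfl)),
    intervalIntegral.integral_add (intervalIntegrable_horizontalSide hf (.inr rfl))
      (intervalIntegrable_horizontalSide hg (.inr rfl)),
    intervalIntegral.integral_add (intervalIntegrable_verticalSide hf (.inl rfl))
      (intervalIntegrable_verticalSide hg (.inl rfl)),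
    intervalIntegral.integral_add (intervalIntegrable_verticalSide hf (.inr rfl))
      (intervalIntegrable_verticalSide hg (.inr rfl))]
  ring

lemma rectangleIntegral_const_mul (c : ℂ) (f : ℂ → ℂ) :
    rectangleIntegral z w (fun s => c * f s) = c * rectangleIntegral z w f := by
  simp only [rectangleIntegral, intervalIntegral.integral_const_mul]
  ring

lemma rectangleIntegral_sum {ι : Type*} (S : Finset ι) {f : ι → ℂ → ℂ}
    (hf : ∀ i ∈ S, ContinuousOn (f i) (rectangleBorder z w)) :
    rectangleIntegral z w (fun s => ∑ i ∈ S, f i s) = ∑ i ∈ S, rectangleIntegral z w (f i) := by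
  classical
  induction S using Finset.induction_on with
  | empty => simp [rectangleIntegral]
  | insert i S hi ih =>
    have hS : ∀ j ∈ S, ContinuousOn (f j) (rectangleBorder z w) :=
      fun j hj => hf j (mem_insert_of_mem hj)
    simp only [sum_insert hi]
    rw [rectangleIntegral_add (hf i (mem_insert_self i S)) (continuousOn_finsetSum S hS), ih hS]

lemma rectangleIntegral_eq_zero_of_differentiableOn (hf : DifferentiableOn ℂ f (Rectangle z w)) :
    rectangleIntegral z w f = 0 := by
  simpa only [rectangleIntegral, smul_eq_mul] using
    integral_boundary_rect_eq_zero_of_differentiableOn f z w hf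

lemma integral_horizontal_eq_sub_of_hasDerivAt {a b : ℝ}
    (hF : ∀ x ∈ [[a, b]], HasDerivAt F (f (x + v * I)) (x + v * I))
    (hf : IntervalIntegrable (fun x : ℝ => f (x + v * I)) volume a b) :
    ∫ x : ℝ in a..b, f (x + v * I) = F (b + v * I) - F (a + v * I) :=
  intervalIntegral.integral_eq_sub_of_hasDerivAt (f := fun x : ℝ => F (x + v * I))
    (fun x hx => (HasDerivAt.comp_add_const (x : ℂ) (v * I) (hF x hx)).comp_ofReal) hf

lemma integral_vertical_eq_sub_of_hasDerivAt {a b : ℝ}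
    (hF : ∀ y ∈ [[a, b]], HasDerivAt F (f (u + y * I)) (u + y * I))
    (hf : IntervalIntegrable (fun y : ℝ => f (u + y * I)) volume a b) :
    I * ∫ y : ℝ in a..b, f (u + y * I) = F (u + b * I) - F (u + a * I) := by
  rw [← intervalIntegral.integral_const_mul]
  refine intervalIntegral.integral_eq_sub_of_hasDerivAt (f := fun y : ℝ => F (u + y * I))
    (fun y hy => ?_) (hf.const_mul _)
  have hline : HasDerivAt (fun y : ℂ => (u : ℂ) + y * I) I y := by
    simpa using ((hasDerivAt_id (y : ℂ)).mul_const I).const_add (u : ℂ)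
  rw [mul_comm]
  exact (HasDerivAt.comp (y : ℂ) (h₂ := F) (hF y hy) hline).comp_ofReal

lemma rectangleIntegral_eq_zero_of_hasDerivAt (hf : ContinuousOn f (rectangleBorder z w))
    (hF : ∀ s ∈ rectangleBorder z w, HasDerivAt F (f s) s) : rectangleIntegral z w f = 0 := by
  have horizontal {v : ℝ} (hv : v = z.im ∨ v = w.im) :
      ∫ x : ℝ in z.re..w.re, f (x + v * I) = F (w.re + v * I) - F (z.re + v * I) :=
    integral_horizontal_eq_sub_of_hasDerivAt
      (fun x hx => hF _ (add_mul_I_mem_rectangleBorder_of_im hv hx))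
      (intervalIntegrable_horizontalSide hf hv)
  have vertical {u : ℝ} (hu : u = z.re ∨ u = w.re) :
      I * ∫ y : ℝ in z.im..w.im, f (u + y * I) = F (u + w.im * I) - F (u + z.im * I) :=
    integral_vertical_eq_sub_of_hasDerivAt
      (fun y hy => hF _ (add_mul_I_mem_rectangleBorder_of_re hu hy))
      (intervalIntegrable_verticalSide hf hu)
  rw [rectangleIntegral, horizontal (.inl rfl), horizontal (.inr rfl),
    vertical (.inl rfl), vertical (.inr rfl)]
  ring

lemma log_neg_of_im_neg {s : ℂ} (hs : s.im < 0) : log (-s) = log s + Real.pi * I := by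
  rw [log, log, norm_neg, arg_neg_eq_arg_add_pi_of_im_neg hs]
  push_cast
  ring

lemma log_neg_of_im_pos {s : ℂ} (hs : 0 < s.im) : log (-s) = log s - Real.pi * I := by
  rw [log, log, norm_neg, arg_neg_eq_arg_sub_pi_of_im_pos hs]
  push_cast
  ring

lemma hasDerivAt_log_sub {s : ℂ} (hs : s - p ∈ slitPlane) :
    HasDerivAt (fun s => log (s - p)) (s - p)⁻¹ s := by
  simpa using ((hasDerivAt_id s).sub_const p).clog hs

lemma hasDerivAt_log_const_sub {s : ℂ} (hs : p - s ∈ slitPlane) :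
    HasDerivAt (fun s => log (p - s)) (s - p)⁻¹ s := by
  refine (((hasDerivAt_id s).const_sub p).clog hs).congr_deriv ?_
  rw [id, ← neg_sub s p, div_neg, neg_div, neg_neg, one_div]

lemma continuousOn_sub_pow_inv (hp : p ∈ Set.Ioo z.re w.re ×ℂ Set.Ioo z.im w.im) (k : ℕ) :
    ContinuousOn (fun s => ((s - p) ^ k)⁻¹) (rectangleBorder z w) :=
  ContinuousOn.inv₀ (by fun_prop) fun _ hs =>
    pow_ne_zero k (sub_ne_zero.2 (ne_of_mem_rectangleBorder hp hs))

-- `log (s - p)` is a primitive on three sides; on the left side, which meets the branch cut, use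
-- `log (p - s)`. The two differ by `∓πi` above and below `p`.
lemma rectangleIntegral_sub_inv (hp : p ∈ Set.Ioo z.re w.re ×ℂ Set.Ioo z.im w.im) :
    rectangleIntegral z w (fun s => (s - p)⁻¹) = 2 * Real.pi * I := by
  have hc : ContinuousOn (fun s => (s - p)⁻¹) (rectangleBorder z w) := by
    simpa using continuousOn_sub_pow_inv hp 1
  obtain ⟨⟨hre₁, hre₂⟩, him₁, him₂⟩ := hp
  have horizontal {v : ℝ} (hv : v = z.im ∨ v = w.im) (hvp : v - p.im ≠ 0) :
      ∫ x : ℝ in z.re..w.re, ((x + v * I : ℂ) - p)⁻¹ =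
        log (w.re + v * I - p) - log (z.re + v * I - p) :=
    integral_horizontal_eq_sub_of_hasDerivAt (F := fun s => log (s - p))
      (fun x _ => hasDerivAt_log_sub (.inr (by simpa using hvp)))
      (intervalIntegrable_horizontalSide hc hv)
  have right : I * ∫ y : ℝ in z.im..w.im, ((w.re + y * I : ℂ) - p)⁻¹ =
      log (w.re + w.im * I - p) - log (w.re + z.im * I - p) :=
    integral_vertical_eq_sub_of_hasDerivAt (F := fun s => log (s - p))
      (fun y _ => hasDerivAt_log_sub (.inl (by simpa using hre₂)))
      (intervalIntegrable_verticalSide hc (.inr rfl))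
  have left : I * ∫ y : ℝ in z.im..w.im, ((z.re + y * I : ℂ) - p)⁻¹ =
      log (p - (z.re + w.im * I)) - log (p - (z.re + z.im * I)) :=
    integral_vertical_eq_sub_of_hasDerivAt (F := fun s => log (p - s))
      (fun y _ => hasDerivAt_log_const_sub (.inl (by simpa using hre₁)))
      (intervalIntegrable_verticalSide hc (.inl rfl))
  have top : log (p - (z.re + w.im * I)) = log (z.re + w.im * I - p) - Real.pi * I := by
    rw [← neg_sub, log_neg_of_im_pos (by simpa using him₂)]
  have bottom : log (p - (z.re + z.im * I)) = log (z.re + z.im * I - p) + Real.pi * I := by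
    rw [← neg_sub, log_neg_of_im_neg (by simpa using him₁)]
  rw [rectangleIntegral, horizontal (.inl rfl) (by linarith), horizontal (.inr rfl) (by linarith),
    right, left, top, bottom]
  ring

lemma rectangleIntegral_sub_inv_mul (hp : p ∈ Set.Ioo z.re w.re ×ℂ Set.Ioo z.im w.im)
    (hf : Differentiable ℂ f) :
    rectangleIntegral z w (fun s => (s - p)⁻¹ * f s) = 2 * Real.pi * I * f p := by
  have hslope : Differentiable ℂ (dslope f p) := by
    rw [← differentiableOn_univ] at hf ⊢
    exact (differentiableOn_dslope Filter.univ_mem).2 hf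
  have hsplit : Set.EqOn (fun s => (s - p)⁻¹ * f s) (fun s => f p * (s - p)⁻¹ + dslope f p s)
      (rectangleBorder z w) := by
    intro s hs
    have hsp := ne_of_mem_rectangleBorder hp hs
    have hsp₀ := sub_ne_zero.2 hsp
    simp only [dslope_of_ne f hsp, slope_def_field]
    field_simp
    ring
  have hc : ContinuousOn (fun s => f p * (s - p)⁻¹) (rectangleBorder z w) := by
    simpa using (continuousOn_sub_pow_inv hp 1).const_mul (f p)
  rw [rectangleIntegral_congr hsplit, rectangleIntegral_add hc hslope.continuous.continuousOn,
    rectangleIntegral_const_mul, rectangleIntegral_sub_inv hp,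
    rectangleIntegral_eq_zero_of_differentiableOn hslope.differentiableOn]
  ring

lemma hasDerivAt_sub_pow_inv {s : ℂ} (hs : s ≠ p) (k : ℕ) :
    HasDerivAt (fun s => ((s - p) ^ k)⁻¹) (-k * ((s - p) ^ (k + 1))⁻¹) s := by
  have hsp := sub_ne_zero.2 hs
  refine ((((hasDerivAt_id s).sub_const p).fun_pow k).fun_inv
    (pow_ne_zero k hsp)).congr_deriv ?_
  rcases k with _ | k
  · simp
  · simp only [id, Nat.add_sub_cancel]
    field_simp
    ring

-- Integration by parts: `((s - p) ^ (-(k + 1)) f s)'` integrates to zero around the rectangle.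
lemma rectangleIntegral_sub_pow_succ_inv_mul
    (hp : p ∈ Set.Ioo z.re w.re ×ℂ Set.Ioo z.im w.im) (hf : Differentiable ℂ f) (k : ℕ) :
    (k + 1) * rectangleIntegral z w (fun s => ((s - p) ^ (k + 2))⁻¹ * f s) =
      rectangleIntegral z w (fun s => ((s - p) ^ (k + 1))⁻¹ * deriv f s) := by
  have hc₁ : ContinuousOn (fun s => -((k : ℂ) + 1) * (((s - p) ^ (k + 2))⁻¹ * f s))
      (rectangleBorder z w) :=
    ((continuousOn_sub_pow_inv hp _).mul hf.continuous.continuousOn).const_mul _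
  have hc₂ : ContinuousOn (fun s => ((s - p) ^ (k + 1))⁻¹ * deriv f s) (rectangleBorder z w) :=
    (continuousOn_sub_pow_inv hp _).mul hf.deriv.continuous.continuousOn
  have hzero := rectangleIntegral_eq_zero_of_hasDerivAt (hc₁.fun_add hc₂)
    (F := fun s => ((s - p) ^ (k + 1))⁻¹ * f s) fun s hs => by
      refine ((hasDerivAt_sub_pow_inv (ne_of_mem_rectangleBorder hp hs) (k + 1)).fun_mul
        (hf s).hasDerivAt).congr_deriv ?_
      push_cast
      ring
  rw [rectangleIntegral_add hc₁ hc₂, rectangleIntegral_const_mul] at hzero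
  linear_combination -hzero

lemma rectangleIntegral_sub_pow_inv_mul (hp : p ∈ Set.Ioo z.re w.re ×ℂ Set.Ioo z.im w.im)
    (hf : Differentiable ℂ f) (k : ℕ) :
    rectangleIntegral z w (fun s => ((s - p) ^ (k + 1))⁻¹ * f s) =
      2 * Real.pi * I * (iteratedDeriv k f p / k.factorial) := by
  induction k generalizing f with
  | zero => simpa using rectangleIntegral_sub_inv_mul hp hf
  | succ k ih =>
    have hk : (k : ℂ) + 1 ≠ 0 := by exact_mod_cast k.succ_ne_zero
    have hparts := rectangleIntegral_sub_pow_succ_inv_mul hp hf k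
    rw [ih hf.deriv, ← iteratedDeriv_succ'] at hparts
    apply mul_left_cancel₀ hk
    rw [hparts, Nat.factorial_succ]
    push_cast
    field_simp

end RectangleIntegral

section ResidueTheorem

open Topology

variable {z w p : ℂ} {φ f q : ℂ → ℂ}

lemma differentiableAt_update_of_eventually_eq {s : ℂ} (hφ : s ≠ p → DifferentiableAt ℂ φ s)
    (hq : DifferentiableAt ℂ q p) (hφq : ∀ᶠ s in 𝓝[≠] p, φ s = q s) :
    DifferentiableAt ℂ (Function.update φ p (q p)) s := by
  rcases eq_or_ne s p with rfl | hs
  · refine hq.congr_of_eventuallyEq ?_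
    filter_upwards [eventually_nhdsWithin_iff.1 hφq] with t ht
    rcases eq_or_ne t s with rfl | hts
    · simp
    · rw [Function.update_of_ne hts, ht hts]
  · refine (hφ hs).congr_of_eventuallyEq ?_
    filter_upwards [isOpen_compl_singleton.mem_nhds hs] with t ht
    exact Function.update_of_ne ht ..

lemma differentiableAt_sum_sub_pow_inv {s : ℂ} (hs : s ≠ p) (c : ℕ → ℂ) (m : ℕ) :
    DifferentiableAt ℂ (fun s => ∑ k ∈ range m, c k * ((s - p) ^ (k + 1))⁻¹) s :=
  DifferentiableAt.fun_sum fun k _ =>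
    (hasDerivAt_sub_pow_inv hs (k + 1)).differentiableAt.const_mul (c k)

lemma rectangleIntegral_mul_eq_sum_of_polarPart {c : ℕ → ℂ} {m : ℕ}
    (hp : p ∈ Set.Ioo z.re w.re ×ℂ Set.Ioo z.im w.im)
    (hφ : ∀ s ∈ Rectangle z w, s ≠ p → DifferentiableAt ℂ φ s) (hf : Differentiable ℂ f)
    (hq : DifferentiableAt ℂ q p)
    (hφq : ∀ᶠ s in 𝓝[≠] p, φ s = ∑ k ∈ range m, c k * ((s - p) ^ (k + 1))⁻¹ + q s) :
    rectangleIntegral z w (fun s => φ s * f s) =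
      2 * Real.pi * I * ∑ k ∈ range m, c k * (iteratedDeriv k f p / k.factorial) := by
  set polar : ℂ → ℂ := fun s => ∑ k ∈ range m, c k * ((s - p) ^ (k + 1))⁻¹ with hpolar
  set regular : ℂ → ℂ := Function.update (fun s => φ s - polar s) p (q p) with hregular
  have hregular_diff : DifferentiableOn ℂ (fun s => regular s * f s) (Rectangle z w) := by
    intro s hs
    have hdiff : s ≠ p → DifferentiableAt ℂ (fun s => φ s - polar s) s := fun hsp =>
      (hφ s hs hsp).fun_sub (differentiableAt_sum_sub_pow_inv hsp c m)
    exact ((differentiableAt_update_of_eventually_eq hdiff hq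
      (hφq.mono fun s hs => sub_eq_of_eq_add' hs)).fun_mul (hf s)).differentiableWithinAt
  have hterm (k : ℕ) : ContinuousOn (fun s => c k * (((s - p) ^ (k + 1))⁻¹ * f s))
      (rectangleBorder z w) :=
    ((continuousOn_sub_pow_inv hp _).mul hf.continuous.continuousOn).const_mul _
  have hsplit : Set.EqOn (fun s => φ s * f s)
      (fun s => ∑ k ∈ range m, c k * (((s - p) ^ (k + 1))⁻¹ * f s) + regular s * f s)
      (rectangleBorder z w) := by
    intro s hs
    simp only [hregular, Function.update_of_ne (ne_of_mem_rectangleBorder hp hs), hpolar,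
      ← mul_assoc, ← sum_mul]
    ring
  rw [rectangleIntegral_congr hsplit, rectangleIntegral_add
      (continuousOn_finsetSum _ fun k _ => hterm k)
      (hregular_diff.continuousOn.mono rectangleBorder_subset),
    rectangleIntegral_eq_zero_of_differentiableOn hregular_diff, add_zero,
    rectangleIntegral_sum _ fun k _ => hterm k, mul_sum]
  refine sum_congr rfl fun k _ => ?_
  rw [rectangleIntegral_const_mul, rectangleIntegral_sub_pow_inv_mul hp hf]
  ring

end ResidueTheorem

section LaurentExpansion

open Topology

variable {p : ℂ} {a : ℕ → ℂ} {f g : ℂ → ℂ}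

lemma exists_hasFPowerSeriesAt_of_eventually_hasSum
    (hf : ∀ᶠ s in 𝓝[≠] p, HasSum (fun j : ℕ => a j * (s - p) ^ j) (f s)) :
    ∃ g : ℂ → ℂ, HasFPowerSeriesAt g (FormalMultilinearSeries.ofScalars ℂ a) p ∧
      ∀ᶠ s in 𝓝[≠] p, f s = g s := by
  refine ⟨fun s => ∑' j, a j * (s - p) ^ j, ?_, hf.mono fun s hs => hs.tsum_eq.symm⟩
  rw [hasFPowerSeriesAt_iff']
  filter_upwards [eventually_nhdsWithin_iff.1 hf] with s hs
  simp only [FormalMultilinearSeries.coeff_ofScalars, smul_eq_mul, mul_comm _ (a _)]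
  rcases eq_or_ne s p with rfl | hsp
  · refine (summable_of_ne_finset_zero (s := {0}) fun j hj => ?_).hasSum
    simp [show j ≠ 0 by simpa using hj]
  · exact (hs hsp).summable.hasSum

lemma exists_analyticAt_eq_sum_add_pow_mul
    (hf : ∀ᶠ s in 𝓝[≠] p, HasSum (fun j : ℕ => a j * (s - p) ^ j) (f s)) (m : ℕ) :
    ∃ g : ℂ → ℂ, AnalyticAt ℂ g p ∧
      ∀ᶠ s in 𝓝[≠] p, f s = ∑ j ∈ range m, a j * (s - p) ^ j + (s - p) ^ m * g s := by
  have htail : ∀ᶠ s in 𝓝[≠] p, HasSum (fun j : ℕ => a (j + m) * (s - p) ^ j)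
      ((f s - ∑ j ∈ range m, a j * (s - p) ^ j) / (s - p) ^ m) := by
    filter_upwards [hf, self_mem_nhdsWithin] with s hs hsp
    have hpow : (s - p) ^ m ≠ 0 := pow_ne_zero _ (sub_ne_zero.2 hsp)
    have hshift : HasSum (fun j : ℕ => a (j + m) * (s - p) ^ (j + m))
        (f s - ∑ j ∈ range m, a j * (s - p) ^ j) := by
      rw [hasSum_nat_add_iff (f := fun j : ℕ => a j * (s - p) ^ j) m]
      simpa using hs
    simpa only [pow_add, ← mul_assoc, mul_div_cancel_right₀ _ hpow] using
      hshift.div_const ((s - p) ^ m)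
  obtain ⟨g, hg, hfg⟩ := exists_hasFPowerSeriesAt_of_eventually_hasSum htail
  refine ⟨g, hg.analyticAt, ?_⟩
  filter_upwards [hfg, self_mem_nhdsWithin] with s hs hsp
  have hpow : (s - p) ^ m ≠ 0 := pow_ne_zero _ (sub_ne_zero.2 hsp)
  rw [← hs]
  field_simp
  ring

lemma iteratedDeriv_eq_factorial_mul_of_hasFPowerSeriesAt
    (hg : HasFPowerSeriesAt g (FormalMultilinearSeries.ofScalars ℂ a) p) (n : ℕ) :
    iteratedDeriv n g p = n.factorial * a n := by
  have hcoeff := congrArg (fun P => FormalMultilinearSeries.coeff P n)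
    (hg.analyticAt.hasFPowerSeriesAt.eq_formalMultilinearSeries hg)
  simp only [FormalMultilinearSeries.coeff_ofScalars] at hcoeff
  rw [← hcoeff, mul_div_cancel₀ _ (by exact_mod_cast n.factorial_ne_zero)]

lemma analyticAt_iteratedDeriv {s : ℂ} (hg : AnalyticAt ℂ g s) (n : ℕ) :
    AnalyticAt ℂ (iteratedDeriv n g) s := by
  rw [iteratedDeriv_eq_iterate]
  exact hg.iterated_deriv n

lemma analyticAt_dslope (hg : AnalyticAt ℂ g p) : AnalyticAt ℂ (dslope g p) p :=
  let ⟨_, hP⟩ := hg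
  hP.has_fpower_series_dslope_fslope.analyticAt

lemma iteratedDeriv_sub_inv (n : ℕ) (s : ℂ) :
    iteratedDeriv n (fun s => (s - p)⁻¹) s =
      (-1) ^ n * n.factorial * ((s - p) ^ (n + 1))⁻¹ := by
  have h := congrFun (iter_deriv_inv_linear_sub n (1 : ℂ) p) s
  simp only [one_mul, one_pow, mul_one] at h
  rw [iteratedDeriv_eq_iterate, h, show (-1 - n : ℤ) = -((n + 1 : ℕ) : ℤ) by push_cast; ring,
    zpow_neg, zpow_natCast]

lemma eventually_iteratedDeriv_eq_of_add_inv_eq (hg : AnalyticAt ℂ g p)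
    (hfg : ∀ᶠ s in 𝓝[≠] p, f s + 1 / (s - p) = g s) (n : ℕ) :
    ∀ᶠ s in 𝓝[≠] p, iteratedDeriv n f s =
      (-1) ^ (n + 1) * n.factorial * ((s - p) ^ (n + 1))⁻¹ + iteratedDeriv n g s := by
  have hg_near : ∀ᶠ s in 𝓝[≠] p, AnalyticAt ℂ g s :=
    hg.eventually_analyticAt.filter_mono nhdsWithin_le_nhds
  filter_upwards [eventually_eventually_nhdsWithin.2 hfg, hg_near, self_mem_nhdsWithin]
    with s hs hgs hsp
  rw [isOpen_compl_singleton.nhdsWithin_eq hsp] at hs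
  have hf : f =ᶠ[𝓝 s] fun t => g t - (t - p)⁻¹ :=
    hs.mono fun t ht => eq_sub_of_add_eq (by rw [← one_div, ht])
  have hinv : AnalyticAt ℂ (fun t : ℂ => (t - p)⁻¹) s :=
    (analyticAt_id.sub analyticAt_const).inv (sub_ne_zero.2 hsp)
  rw [hf.iteratedDeriv_eq n, iteratedDeriv_fun_sub hgs.contDiffAt hinv.contDiffAt,
    iteratedDeriv_sub_inv]
  ring

/-- Laurent coefficients of `f(s) / s` at the simple pole `s = 1`, where
`f(s) = 1 / (s - 1) + ∑ C j (s - 1) ^ j`; the index is shifted so that `divIdCoeff C k` belongs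
to `(s - 1) ^ (k - 1)`. -/
def divIdCoeff (C : ℕ → ℂ) : ℕ → ℂ
  | 0 => 1
  | k + 1 => C k - divIdCoeff C k

lemma divIdCoeff_succ_eq (C : ℕ → ℂ) (k : ℕ) :
    divIdCoeff C (k + 1) = (-1) ^ k * (-1 + ∑ j ∈ range (k + 1), (-1) ^ j * C j) := by
  induction k with
  | zero => simp [divIdCoeff]; ring
  | succ k ih =>
    have hsign : (-1 : ℂ) ^ k * (-1) ^ k = 1 := by rw [← mul_pow]; simp
    rw [divIdCoeff, ih, sum_range_succ _ (k + 1)]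
    simp only [pow_succ]
    linear_combination -C (k + 1) * hsign

lemma one_add_mul_sum_divIdCoeff (C : ℕ → ℂ) (x : ℂ) (m : ℕ) :
    (1 + x) * ∑ k ∈ range (m + 1), divIdCoeff C k * x ^ k =
      1 + x * ∑ k ∈ range m, C k * x ^ k + divIdCoeff C m * x ^ (m + 1) := by
  induction m with
  | zero => simp [divIdCoeff]
  | succ m ih =>
    rw [sum_range_succ, mul_add, ih, sum_range_succ _ m, divIdCoeff]
    ring

lemma exists_analyticAt_div_id_eq {C : ℕ → ℂ}
    (hC : ∀ᶠ s in 𝓝[≠] 1, HasSum (fun j : ℕ => C j * (s - 1) ^ j) (f s - 1 / (s - 1))) (m : ℕ) :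
    ∃ r : ℂ → ℂ, AnalyticAt ℂ r 1 ∧ ∀ᶠ s in 𝓝[≠] 1, f s / s =
      (s - 1)⁻¹ * ∑ k ∈ range (m + 1), divIdCoeff C k * (s - 1) ^ k + (s - 1) ^ m * r s := by
  obtain ⟨G, hG, hfG⟩ := exists_analyticAt_eq_sum_add_pow_mul hC m
  have hne_zero : ∀ᶠ s : ℂ in 𝓝[≠] 1, s ≠ 0 :=
    nhdsWithin_le_nhds (isOpen_compl_singleton.mem_nhds one_ne_zero)
  refine ⟨fun s => (G s - divIdCoeff C m) / s,
    (hG.sub analyticAt_const).div analyticAt_id one_ne_zero, ?_⟩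
  filter_upwards [hfG, self_mem_nhdsWithin, hne_zero] with s hs hs₁ hs₀
  have hs₁' : s - 1 ≠ 0 := sub_ne_zero.2 hs₁
  have halgebra := one_add_mul_sum_divIdCoeff C (s - 1) m
  rw [add_sub_cancel] at halgebra
  rw [sub_eq_iff_eq_add] at hs
  rw [hs]
  field_simp
  linear_combination -halgebra

/-- Polar coefficients at `s = 1` of `L^{(n)}(s) f(s) / s`, where
`f(s) = 1 / (s - 1) + ∑ C j (s - 1) ^ j` and `L(s) = -1 / (s - 1) + ∑ A j (s - 1) ^ j`;
`polarCoeff C A n k` belongs to `(s - 1) ^ (-(k + 1))` for `k ≤ n + 1`. -/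
noncomputable def polarCoeff (C A : ℕ → ℂ) (n k : ℕ) : ℂ :=
  (-1) ^ (n + 1) * n.factorial * divIdCoeff C (n + 1 - k)
    + (Pi.single 0 (n.factorial * A n) : ℕ → ℂ) k

lemma sum_polarCoeff_mul (C A : ℕ → ℂ) (n : ℕ) (b : ℕ → ℂ) :
    ∑ k ∈ range (n + 2), polarCoeff C A n k * b k =
      (-1) ^ (n + 1) * n.factorial * ∑ k ∈ range (n + 2), divIdCoeff C k * b (n + 1 - k)
        + n.factorial * A n * b 0 := by
  have hflip : ∑ k ∈ range (n + 2), divIdCoeff C (n + 1 - k) * b k =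
      ∑ k ∈ range (n + 2), divIdCoeff C k * b (n + 1 - k) := by
    rw [← sum_flip (fun k => divIdCoeff C k * b (n + 1 - k))]
    refine sum_congr rfl fun k hk => ?_
    rw [Nat.sub_sub_self (mem_range_succ_iff.1 hk)]
  rw [← hflip, mul_sum]
  simp only [polarCoeff, add_mul, sum_add_distrib, mul_assoc]
  congr 1
  rw [sum_eq_single_of_mem 0 (by simp) fun k _ hk => by simp [hk], Pi.single_eq_same, mul_assoc]

lemma exists_analyticAt_iteratedDeriv_eq
    (hf : ∀ᶠ s in 𝓝[≠] p, HasSum (fun j : ℕ => a j * (s - p) ^ j) (f s + 1 / (s - p)))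
    (n : ℕ) :
    ∃ h : ℂ → ℂ, AnalyticAt ℂ h p ∧ ∀ᶠ s in 𝓝[≠] p, iteratedDeriv n f s =
      (-1) ^ (n + 1) * n.factorial * ((s - p) ^ (n + 1))⁻¹ + n.factorial * a n
        + (s - p) * h s := by
  obtain ⟨g, hg, hfg⟩ := exists_hasFPowerSeriesAt_of_eventually_hasSum hf
  refine ⟨_, analyticAt_dslope (analyticAt_iteratedDeriv hg.analyticAt n), ?_⟩
  filter_upwards [eventually_iteratedDeriv_eq_of_add_inv_eq hg.analyticAt hfg n] with s hs
  have htaylor := sub_smul_dslope (iteratedDeriv n g) p s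
  rw [smul_eq_mul, iteratedDeriv_eq_factorial_mul_of_hasFPowerSeriesAt hg] at htaylor
  rw [hs, htaylor]
  ring

lemma exists_analyticAt_iteratedDeriv_mul_div_id_eq {C A : ℕ → ℂ} {L : ℂ → ℂ}
    (hC : ∀ᶠ s in 𝓝[≠] 1, HasSum (fun j : ℕ => C j * (s - 1) ^ j) (f s - 1 / (s - 1)))
    (hA : ∀ᶠ s in 𝓝[≠] 1, HasSum (fun j : ℕ => A j * (s - 1) ^ j) (L s + 1 / (s - 1)))
    (n : ℕ) :
    ∃ q : ℂ → ℂ, AnalyticAt ℂ q 1 ∧ ∀ᶠ s in 𝓝[≠] 1, iteratedDeriv n L s * (f s / s) =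
      ∑ k ∈ range (n + 2), polarCoeff C A n k * ((s - 1) ^ (k + 1))⁻¹ + q s := by
  obtain ⟨h, hh, hL⟩ := exists_analyticAt_iteratedDeriv_eq hA n
  obtain ⟨r, hr, hf⟩ := exists_analyticAt_div_id_eq hC (n + 1)
  obtain ⟨r₀, hr₀, hf₀⟩ := exists_analyticAt_div_id_eq hC 0
  refine ⟨fun s => (-1) ^ (n + 1) * n.factorial * r s + n.factorial * A n * r₀ s
      + h s * (1 + (s - 1) * r₀ s), by fun_prop, ?_⟩
  filter_upwards [hL, hf, hf₀, self_mem_nhdsWithin] with s hLs hfs hfs₀ hs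
  have hs' : s - 1 ≠ 0 := sub_ne_zero.2 hs
  have hsum : ∑ k ∈ range (n + 2), divIdCoeff C k * ((s - 1) ^ (n + 1 - k + 1))⁻¹ =
      ((s - 1) ^ (n + 1))⁻¹ *
        ((s - 1)⁻¹ * ∑ k ∈ range (n + 2), divIdCoeff C k * (s - 1) ^ k) := by
    rw [mul_sum, mul_sum]
    refine sum_congr rfl fun k hk => ?_
    have hpow : (s - 1) ^ (n + 1) * (s - 1) = (s - 1) ^ (n + 1 - k + 1) * (s - 1) ^ k := by
      rw [← pow_succ, ← pow_add]
      congr 1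
      have := mem_range_succ_iff.1 hk
      lia
    field_simp
    linear_combination divIdCoeff C k * hpow
  simp only [zero_add, sum_range_one, divIdCoeff, pow_zero, mul_one, one_mul] at hfs₀
  calc iteratedDeriv n L s * (f s / s)
      = (-1) ^ (n + 1) * n.factorial * (((s - 1) ^ (n + 1))⁻¹ * (f s / s))
        + n.factorial * A n * (f s / s) + h s * ((s - 1) * (f s / s)) := by rw [hLs]; ring
    _ = _ := by
      rw [sum_polarCoeff_mul, hsum]
      nth_rw 1 [hfs]
      rw [hfs₀]
      field_simp
      ring

end LaurentExpansion

section ContourShift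

variable {C A : ℕ → ℂ} {n : ℕ} {Y : ℝ}

lemma differentiable_const_cpow (hY : 0 < Y) : Differentiable ℂ fun s : ℂ => (Y : ℂ) ^ s :=
  differentiable_id.const_cpow (.inl (by exact_mod_cast hY.ne'))

lemma iteratedDeriv_const_cpow (hY : 0 < Y) (k : ℕ) (s : ℂ) :
    iteratedDeriv k (fun s : ℂ => (Y : ℂ) ^ s) s = Real.log Y ^ k * (Y : ℂ) ^ s := by
  have hcpow (s : ℂ) : (Y : ℂ) ^ s = exp (Real.log Y * s) := by
    rw [cpow_def_of_ne_zero (by exact_mod_cast hY.ne'), ofReal_log hY.le]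
  simp only [hcpow, iteratedDeriv_cexp_const_mul]

lemma sum_polarCoeff_mul_log_pow (C A : ℕ → ℂ) (n : ℕ) (Y : ℝ) :
    ∑ k ∈ range (n + 2), polarCoeff C A n k * (Real.log Y ^ k * Y / k.factorial : ℂ) =
      Mterm C A n Y := by
  have hn : (n : ℂ) + 1 ≠ 0 := by exact_mod_cast n.succ_ne_zero
  have hfactorial (k : ℕ) : (k.factorial : ℂ) ≠ 0 := by exact_mod_cast k.factorial_ne_zero
  rw [sum_polarCoeff_mul, sum_range_succ', mul_add, Mterm, add_comm (_ * ∑ _ ∈ _, _) (_ * _)]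
  congr 1
  · congr 1
    · rw [divIdCoeff, Nat.sub_zero, Nat.factorial_succ]
      push_cast
      field_simp [hfactorial n]
    · rw [mul_assoc, mul_sum, mul_sum, mul_sum]
      refine sum_congr rfl fun k hk => ?_
      have hchoose : (n.choose k : ℂ) * k.factorial * (n - k).factorial = n.factorial := by
        exact_mod_cast Nat.choose_mul_factorial_mul_factorial (mem_range_succ_iff.1 hk)
      rw [divIdCoeff_succ_eq, Nat.add_sub_add_right, ← hchoose]
      push_cast
      field_simp [hfactorial (n - k)]
  · simp

/-- The integrand of `perronIntegral`. -/
noncomputable def perronIntegrand (n : ℕ) (Y : ℝ) (s : ℂ) : ℂ :=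
  iteratedDeriv n (logDeriv riemannZeta) s * riemannZeta s * (Y : ℂ) ^ s / s

lemma differentiableAt_iteratedDeriv_logDeriv_riemannZeta (hRH : RiemannHypothesis) {s : ℂ}
    (hs : 1 / 2 < s.re) (hs₁ : s ≠ 1) (n : ℕ) :
    DifferentiableAt ℂ (iteratedDeriv n (logDeriv riemannZeta)) s := by
  have hopen : IsOpen {s : ℂ | 1 / 2 < s.re ∧ s ≠ 1} :=
    (isOpen_lt continuous_const continuous_re).inter isOpen_compl_singleton
  have hdiff : DifferentiableOn ℂ (logDeriv riemannZeta) {s : ℂ | 1 / 2 < s.re ∧ s ≠ 1} :=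
    fun s hs => (differentiableAt_logDeriv_riemannZeta hs.2
      (riemannZeta_ne_zero_of_half_lt_re hRH hs.1)).differentiableWithinAt
  exact (analyticAt_iteratedDeriv (hdiff.analyticAt (hopen.mem_nhds ⟨hs, hs₁⟩)) n).differentiableAt

lemma rectangleIntegral_perronIntegrand (hRH : RiemannHypothesis)
    (hC : ∀ᶠ s in nhdsWithin (1 : ℂ) {(1 : ℂ)}ᶜ,
      HasSum (fun j : ℕ => C j * (s - 1) ^ j) (riemannZeta s - 1 / (s - 1)))
    (hA : ∀ᶠ s in nhdsWithin (1 : ℂ) {(1 : ℂ)}ᶜ,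
      HasSum (fun j : ℕ => A j * (s - 1) ^ j) (logDeriv riemannZeta s + 1 / (s - 1)))
    (hY : 0 < Y) {z w : ℂ} (hz : 1 / 2 < z.re)
    (h_one : (1 : ℂ) ∈ Set.Ioo z.re w.re ×ℂ Set.Ioo z.im w.im) :
    rectangleIntegral z w (perronIntegrand n Y) = 2 * Real.pi * I * Mterm C A n Y := by
  obtain ⟨q, hq, hpolar⟩ := exists_analyticAt_iteratedDeriv_mul_div_id_eq hC hA n
  have hdiff : ∀ s ∈ Rectangle z w, s ≠ 1 → DifferentiableAt ℂ
      (fun s => iteratedDeriv n (logDeriv riemannZeta) s * (riemannZeta s / s)) s := by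
    intro s hs hs₁
    have hre : 1 / 2 < s.re :=
      hz.trans_le (Set.uIcc_of_le (h_one.1.1.trans h_one.1.2).le ▸ hs.1).1
    have hs₀ : s ≠ 0 := ne_of_re_ne (by simp; linarith)
    exact (differentiableAt_iteratedDeriv_logDeriv_riemannZeta hRH hre hs₁ n).fun_mul
      ((differentiableAt_riemannZeta hs₁).fun_div differentiableAt_id hs₀)
  have hresidue := rectangleIntegral_mul_eq_sum_of_polarPart h_one hdiff
    (differentiable_const_cpow hY) hq.differentiableAt hpolar
  simp only [iteratedDeriv_const_cpow hY, cpow_one, sum_polarCoeff_mul_log_pow] at hresidue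
  rw [← hresidue]
  congr 1
  funext s
  rw [perronIntegrand]
  ring

lemma perronIntegral_sub_Mterm_eq (hRH : RiemannHypothesis)
    (hC : ∀ᶠ s in nhdsWithin (1 : ℂ) {(1 : ℂ)}ᶜ,
      HasSum (fun j : ℕ => C j * (s - 1) ^ j) (riemannZeta s - 1 / (s - 1)))
    (hA : ∀ᶠ s in nhdsWithin (1 : ℂ) {(1 : ℂ)}ᶜ,
      HasSum (fun j : ℕ => A j * (s - 1) ^ j) (logDeriv riemannZeta s + 1 / (s - 1)))
    (hY : 0 < Y) {a c V : ℝ} (ha : 1 / 2 < a) (ha₁ : a < 1) (hc : 1 < c) (hV : 0 < V) :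
    perronIntegral n c V Y - Mterm C A n Y = ((1 / (2 * Real.pi) : ℝ) : ℂ) *
      ((∫ t : ℝ in -V..V, perronIntegrand n Y (a + t * I))
        - I * ((∫ x : ℝ in a..c, perronIntegrand n Y (x + V * I))
          - ∫ x : ℝ in a..c, perronIntegrand n Y (x + (-V : ℝ) * I))) := by
  have h_one : (1 : ℂ) ∈ Set.Ioo a c ×ℂ Set.Ioo (-V) V :=
    ⟨⟨ha₁, hc⟩, by simpa using hV⟩
  have hresidue := rectangleIntegral_perronIntegrand (n := n) (z := ⟨a, -V⟩) (w := ⟨c, V⟩)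
    hRH hC hA hY ha h_one
  have hperron : perronIntegral n c V Y = ((1 / (2 * Real.pi) : ℝ) : ℂ) *
      ∫ t : ℝ in -V..V, perronIntegrand n Y (c + t * I) := rfl
  have hpi : (Real.pi : ℂ) ≠ 0 := by exact_mod_cast Real.pi_ne_zero
  rw [hperron]
  simp only [rectangleIntegral] at hresidue
  generalize (∫ t : ℝ in -V..V, perronIntegrand n Y (c + t * I)) = right at *
  generalize (∫ t : ℝ in -V..V, perronIntegrand n Y (a + t * I)) = left at *
  generalize (∫ x : ℝ in a..c, perronIntegrand n Y (x + V * I)) = top at *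
  generalize (∫ x : ℝ in a..c, perronIntegrand n Y (x + (-V : ℝ) * I)) = bottom at *
  push_cast at hresidue ⊢
  field_simp
  linear_combination (-I) * hresidue + (right - left - 2 * Real.pi * Mterm C A n Y) * I_sq

lemma norm_perronIntegral_sub_Mterm_le (hRH : RiemannHypothesis)
    (hC : ∀ᶠ s in nhdsWithin (1 : ℂ) {(1 : ℂ)}ᶜ,
      HasSum (fun j : ℕ => C j * (s - 1) ^ j) (riemannZeta s - 1 / (s - 1)))
    (hA : ∀ᶠ s in nhdsWithin (1 : ℂ) {(1 : ℂ)}ᶜ,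
      HasSum (fun j : ℕ => A j * (s - 1) ^ j) (logDeriv riemannZeta s + 1 / (s - 1)))
    (hY : 0 < Y) {a c V : ℝ} (ha : 1 / 2 < a) (ha₁ : a < 1) (hc : 1 < c) (hV : 0 < V) :
    ‖perronIntegral n c V Y - Mterm C A n Y‖ ≤
      ‖∫ t : ℝ in -V..V, perronIntegrand n Y (a + t * I)‖
        + (‖∫ x : ℝ in a..c, perronIntegrand n Y (x + V * I)‖
          + ‖∫ x : ℝ in a..c, perronIntegrand n Y (x + (-V : ℝ) * I)‖) := by
  have hfactor : ‖((1 / (2 * Real.pi) : ℝ) : ℂ)‖ ≤ 1 := by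
    rw [norm_real, Real.norm_of_nonneg (by positivity), div_le_one (by positivity)]
    linarith [Real.pi_gt_three]
  rw [perronIntegral_sub_Mterm_eq hRH hC hA hY ha ha₁ hc hV, norm_mul]
  refine (mul_le_of_le_one_left (norm_nonneg _) hfactor).trans ((norm_sub_le _ _).trans ?_)
  rw [norm_mul, norm_I, one_mul]
  gcongr
  exact norm_sub_le _ _

end ContourShift

section SideBounds

variable {n : ℕ} {Y V : ℝ}

lemma norm_cpow_le_exp_one_mul_rpow (hY : 1 < Y) {s : ℂ} {r : ℝ}
    (hs : s.re ≤ r + 1 / Real.log Y) : ‖(Y : ℂ) ^ s‖ ≤ Real.exp 1 * Y ^ r := by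
  have hY₀ : 0 < Y := by linarith
  have hlog : 0 < Real.log Y := Real.log_pos hY
  have hexp : Y ^ (1 / Real.log Y) = Real.exp 1 := by
    rw [Real.rpow_def_of_pos hY₀, mul_one_div_cancel hlog.ne']
  calc ‖(Y : ℂ) ^ s‖ = Y ^ s.re := norm_cpow_eq_rpow_re_of_pos hY₀ s
    _ ≤ Y ^ (r + 1 / Real.log Y) := Real.rpow_le_rpow_of_exponent_le hY.le hs
    _ = Real.exp 1 * Y ^ r := by rw [Real.rpow_add hY₀, hexp, mul_comm]

lemma nine_le_of_eight_le_log (hY : 0 < Y) (hL : 8 ≤ Real.log Y) : 9 ≤ Y := by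
  linarith [Real.log_le_sub_one_of_pos hY]

lemma log_add_five_le_two_mul_log (hY : 9 ≤ Y) (hV₀ : 0 ≤ V) (hV : V ≤ 8 * Y) :
    Real.log (V + 5) ≤ 2 * Real.log Y := by
  have hsq : V + 5 ≤ Y ^ 2 := by nlinarith
  simpa using Real.log_le_log (by linarith) hsq

lemma pow_add_two_mul_sqrt {x : ℝ} (hx : 0 < x) (n : ℕ) :
    x ^ (n + 2) * √x = x ^ ((n : ℝ) + 5 / 2) := by
  rw [Real.sqrt_eq_rpow, ← Real.rpow_natCast, ← Real.rpow_add hx]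
  congr 1
  push_cast
  ring

lemma exists_norm_perronIntegrand_le_zetaMajorant (hRH : RiemannHypothesis) (n : ℕ) :
    ∃ K > 0, ∀ Y : ℝ, 0 < Y → 8 ≤ Real.log Y → ∀ s : ℂ, s.re = 1 / 2 + 1 / Real.log Y →
      ‖perronIntegrand n Y s‖ ≤
        K * (Y ^ (1 / 2 : ℝ) * Real.log Y ^ n) * (zetaMajorant s / (1 + |s.im|)) := by
  obtain ⟨C, hC, hderiv⟩ := exists_norm_iteratedDeriv_logDeriv_mul_riemannZeta_le hRH n
  refine ⟨3 * C * Real.exp 1, by positivity, fun Y hY hL s hs => ?_⟩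
  have hY₁ : 1 < Y := by linarith [nine_le_of_eight_le_log hY hL]
  set L := Real.log Y
  have hproduct : ‖iteratedDeriv n (logDeriv riemannZeta) s * riemannZeta s‖ ≤
      C / (1 / L) ^ n * zetaMajorant s :=
    hderiv (1 / L) (by positivity) (one_div_le_one_div_of_le (by norm_num) hL) s hs
  have hpower : ‖(Y : ℂ) ^ s‖ ≤ Real.exp 1 * Y ^ (1 / 2 : ℝ) :=
    norm_cpow_le_exp_one_mul_rpow hY₁ hs.le
  have hdenominator : (1 + |s.im|) / 3 ≤ ‖s‖ := by
    have : 0 ≤ 1 / L := by positivity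
    linarith [abs_im_le_norm s, (le_abs_self s.re).trans (abs_re_le_norm s)]
  have := zetaMajorant_nonneg s
  rw [perronIntegrand, norm_div, norm_mul]
  calc ‖iteratedDeriv n (logDeriv riemannZeta) s * riemannZeta s‖ * ‖(Y : ℂ) ^ s‖ / ‖s‖
      ≤ C / (1 / L) ^ n * zetaMajorant s * (Real.exp 1 * Y ^ (1 / 2 : ℝ))
          / ((1 + |s.im|) / 3) := by gcongr
    _ = _ := by
      rw [one_div_pow]
      field_simp

lemma exists_integral_zetaMajorant_div_le_log_sq :
    ∃ K > 0, ∀ Y : ℝ, 0 < Y → 8 ≤ Real.log Y → ∀ V : ℝ, 1 ≤ V → V ≤ 8 * Y →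
      ∫ t : ℝ in -V..V, zetaMajorant (((1 / 2 + 1 / Real.log Y : ℝ) : ℂ) + t * I) / (1 + |t|) ≤
        K * (Real.log Y ^ 2 * √(Real.log Y)) := by
  obtain ⟨C, hC, hintegral⟩ := exists_integral_zetaMajorant_div_le
  refine ⟨12 * C, by positivity, fun Y hY hL V hV₁ hV => ?_⟩
  have hlog := log_add_five_le_two_mul_log (nine_le_of_eight_le_log hY hL) (by linarith) hV
  have hlog₀ := one_le_log_add_five (zero_le_one.trans hV₁)
  set L := Real.log Y
  have hsqrt : √(Real.log (V + 5)) ≤ 2 * √L := by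
    rw [Real.sqrt_le_left (by positivity), mul_pow, Real.sq_sqrt (by linarith)]
    linarith
  calc ∫ t : ℝ in -V..V, zetaMajorant (((1 / 2 + 1 / L : ℝ) : ℂ) + t * I) / (1 + |t|)
      ≤ C * (1 / (1 / L) + Real.log (V + 5)) * √(Real.log (V + 5)) * Real.log (V + 5) :=
        hintegral (1 / L) (by positivity) (one_div_le_one_div_of_le (by norm_num) hL) V hV₁
    _ ≤ C * (L + 2 * L) * (2 * √L) * (2 * L) := by
        rw [one_div_one_div]
        gcongr
    _ = 12 * C * (L ^ 2 * √L) := by ring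

lemma exists_norm_integral_perronIntegrand_vertical_le (hRH : RiemannHypothesis) (n : ℕ) :
    ∃ K > 0, ∀ Y : ℝ, 0 < Y → 8 ≤ Real.log Y → ∀ V : ℝ, 1 ≤ V → V ≤ 8 * Y →
      ‖∫ t : ℝ in -V..V, perronIntegrand n Y ((1 / 2 + 1 / Real.log Y : ℝ) + t * I)‖ ≤
        K * (Y ^ (1 / 2 : ℝ) * Real.log Y ^ ((n : ℝ) + 5 / 2)) := by
  obtain ⟨K₁, hK₁, hpointwise⟩ := exists_norm_perronIntegrand_le_zetaMajorant hRH n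
  obtain ⟨K₂, hK₂, hintegral⟩ := exists_integral_zetaMajorant_div_le_log_sq
  refine ⟨K₁ * K₂, by positivity, fun Y hY hL V hV₁ hV => ?_⟩
  have hbound := hintegral Y hY hL V hV₁ hV
  set L := Real.log Y
  have hσ : 1 / 2 + 1 / L ≠ 1 := by
    linarith [one_div_le_one_div_of_le (by norm_num) hL] |> ne_of_lt
  have hcontinuous : Continuous fun t : ℝ =>
      zetaMajorant (((1 / 2 + 1 / L : ℝ) : ℂ) + t * I) / (1 + |t|) :=
    (continuous_zetaMajorant_add_mul_I hσ).div (by fun_prop) fun t => by positivity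
  have hle : ∀ t : ℝ, ‖perronIntegrand n Y ((1 / 2 + 1 / L : ℝ) + t * I)‖ ≤
      K₁ * (Y ^ (1 / 2 : ℝ) * L ^ n) *
        (zetaMajorant (((1 / 2 + 1 / L : ℝ) : ℂ) + t * I) / (1 + |t|)) := fun t => by
    simpa only [im_add_mul_I] using hpointwise Y hY hL _ (re_add_mul_I _ t)
  calc _ ≤ ∫ t : ℝ in -V..V, K₁ * (Y ^ (1 / 2 : ℝ) * L ^ n) *
          (zetaMajorant (((1 / 2 + 1 / L : ℝ) : ℂ) + t * I) / (1 + |t|)) :=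
        intervalIntegral.norm_integral_le_of_norm_le (by linarith)
          (Filter.Eventually.of_forall fun t _ => hle t)
          ((hcontinuous.intervalIntegrable _ _).const_mul _)
    _ ≤ K₁ * (Y ^ (1 / 2 : ℝ) * L ^ n) * (K₂ * (L ^ 2 * √L)) := by
        rw [intervalIntegral.integral_const_mul]
        gcongr
    _ = K₁ * K₂ * (Y ^ (1 / 2 : ℝ) * L ^ ((n : ℝ) + 5 / 2)) := by
        rw [← pow_add_two_mul_sqrt (by linarith)]
        ring

lemma exists_norm_perronIntegrand_le_horizontal (hRH : RiemannHypothesis) (n : ℕ) :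
    ∃ K > 0, ∀ Y : ℝ, 0 < Y → 8 ≤ Real.log Y → ∀ s : ℂ, 1 / 2 + 1 / Real.log Y ≤ s.re →
      s.re ≤ 1 + 1 / Real.log Y → Y ≤ |s.im| → |s.im| ≤ 8 * Y →
      ‖perronIntegrand n Y s‖ ≤ K * (Y ^ (1 / 2 : ℝ) * Real.log Y ^ (n + 2)) := by
  obtain ⟨C, hC, hderiv⟩ := exists_norm_iteratedDeriv_logDeriv_riemannZeta_le_div hRH n
  refine ⟨72 * C * Real.exp 1, by positivity, fun Y hY hL s hs hs₁ him him₁ => ?_⟩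
  have hY₉ := nine_le_of_eight_le_log hY hL
  have hlog := log_add_five_le_two_mul_log hY₉ (abs_nonneg _) him₁
  have hpower : ‖(Y : ℂ) ^ s‖ ≤ Real.exp 1 * Y ^ (1 : ℝ) :=
    norm_cpow_le_exp_one_mul_rpow (by linarith) hs₁
  set L := Real.log Y
  have hα : 0 < 1 / L := by positivity
  have hα₈ : 1 / L ≤ 1 / 8 := one_div_le_one_div_of_le (by norm_num) hL
  have hlogDeriv : ‖iteratedDeriv n (logDeriv riemannZeta) s‖ ≤ C / (1 / L) ^ (n + 1) * (2 * L) :=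
    (hderiv (1 / L) hα hα₈ s hs (by linarith) (by linarith)).trans (by gcongr)
  have hzeta : ‖riemannZeta s‖ ≤ 12 * (3 * Y ^ (1 / 2 : ℝ)) := by
    refine (norm_riemannZeta_le_sqrt (by linarith) (by linarith) (by linarith)).trans ?_
    rw [← Real.sqrt_eq_rpow]
    gcongr
    rw [Real.sqrt_le_left (by positivity), mul_pow, Real.sq_sqrt hY.le]
    linarith
  have hdenominator : Y ≤ ‖s‖ := him.trans (abs_im_le_norm s)
  rw [Real.rpow_one] at hpower
  rw [perronIntegrand, norm_div, norm_mul, norm_mul]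
  calc ‖iteratedDeriv n (logDeriv riemannZeta) s‖ * ‖riemannZeta s‖ * ‖(Y : ℂ) ^ s‖ / ‖s‖
      ≤ C / (1 / L) ^ (n + 1) * (2 * L) * (12 * (3 * Y ^ (1 / 2 : ℝ))) * (Real.exp 1 * Y) / Y := by
        gcongr
    _ = _ := by
      rw [one_div_pow]
      field_simp
      ring

lemma exists_norm_integral_perronIntegrand_horizontal_le (hRH : RiemannHypothesis) (n : ℕ) :
    ∃ K > 0, ∀ Y : ℝ, 0 < Y → 8 ≤ Real.log Y → ∀ c v : ℝ, 1 < c → c ≤ 1 + 1 / Real.log Y →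
      Y ≤ |v| → |v| ≤ 8 * Y →
      ‖∫ x : ℝ in (1 / 2 + 1 / Real.log Y)..c, perronIntegrand n Y (x + v * I)‖ ≤
        K * (Y ^ (1 / 2 : ℝ) * Real.log Y ^ ((n : ℝ) + 5 / 2)) := by
  obtain ⟨K, hK, hpointwise⟩ := exists_norm_perronIntegrand_le_horizontal hRH n
  refine ⟨K, hK, fun Y hY hL c v hc hc₁ hv hv₁ => ?_⟩
  have hα₈ : 1 / Real.log Y ≤ 1 / 8 := one_div_le_one_div_of_le (by norm_num) hL
  have _ : 0 < 1 / Real.log Y := by positivity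
  have hle : ∀ x ∈ Set.uIoc (1 / 2 + 1 / Real.log Y) c, ‖perronIntegrand n Y (x + v * I)‖ ≤
      K * (Y ^ (1 / 2 : ℝ) * Real.log Y ^ (n + 2)) := by
    intro x hx
    rw [Set.uIoc_of_le (by linarith)] at hx
    apply hpointwise Y hY hL <;> simp only [re_add_mul_I, im_add_mul_I] <;> linarith [hx.1, hx.2]
  have hlength : |c - (1 / 2 + 1 / Real.log Y)| ≤ 1 := by rw [abs_le]; constructor <;> linarith
  calc _ ≤ K * (Y ^ (1 / 2 : ℝ) * Real.log Y ^ (n + 2)) * |c - (1 / 2 + 1 / Real.log Y)| :=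
        intervalIntegral.norm_integral_le_of_norm_le_const hle
    _ ≤ K * (Y ^ (1 / 2 : ℝ) * Real.log Y ^ (n + 2)) :=
        mul_le_of_le_one_right (by positivity) hlength
    _ ≤ K * (Y ^ (1 / 2 : ℝ) * Real.log Y ^ ((n : ℝ) + 5 / 2)) := by
        rw [← pow_add_two_mul_sqrt (by linarith)]
        gcongr
        exact le_mul_of_one_le_right (by positivity) (Real.one_le_sqrt.2 (by linarith))

lemma one_add_one_div_log_mem_Ioc (hY : 1 < Y) (hV : Y ≤ V) :
    1 + 1 / Real.log V ∈ Set.Ioc 1 (1 + 1 / Real.log Y) := by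
  have hlog : 0 < Real.log Y := Real.log_pos hY
  have hlog_le : Real.log Y ≤ Real.log V := Real.log_le_log (by linarith) hV
  have hpos : 0 < 1 / Real.log V := one_div_pos.2 (hlog.trans_le hlog_le)
  exact ⟨by linarith, by gcongr⟩

end SideBounds

/-- assuming the Riemann Hypothesis, with `c = 1 + 1/log(2πY)`
and `V = 2πY`, the truncated Perron integral equals the residue `M_n(Y)` up
to an error `O(Y^{1/2} log^{n+5/2} Y)`. -/
theorem perron_integral_residue_RH (n : ℕ) (hn : 1 ≤ n)
    (hRH : RiemannHypothesis) (C A : ℕ → ℂ)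
    (hC : ∀ᶠ s in nhdsWithin (1 : ℂ) {(1 : ℂ)}ᶜ,
      HasSum (fun j : ℕ => C j * (s - 1) ^ j) (riemannZeta s - 1 / (s - 1)))
    (hA : ∀ᶠ s in nhdsWithin (1 : ℂ) {(1 : ℂ)}ᶜ,
      HasSum (fun j : ℕ => A j * (s - 1) ^ j)
        (deriv riemannZeta s / riemannZeta s + 1 / (s - 1))) :
    ∃ K > (0 : ℝ), ∃ Y₀ : ℝ, ∀ Y ≥ Y₀,
      ∀ c V : ℝ, c = 1 + 1 / Real.log (2 * Real.pi * Y) → V = 2 * Real.pi * Y →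
        ‖perronIntegral n c V Y - Mterm C A n Y‖ ≤
          K * Y ^ ((1 : ℝ) / 2) * Real.log Y ^ ((n : ℝ) + 5 / 2) := by
  obtain ⟨K₁, hK₁, hvertical⟩ := exists_norm_integral_perronIntegrand_vertical_le hRH n
  obtain ⟨K₂, hK₂, hhorizontal⟩ := exists_norm_integral_perronIntegrand_horizontal_le hRH n
  refine ⟨K₁ + 2 * K₂, by positivity, Real.exp 8, ?_⟩
  rintro Y hY c V rfl hV
  have hY₀ : 0 < Y := (Real.exp_pos 8).trans_le hY
  have hL : 8 ≤ Real.log Y := (Real.le_log_iff_exp_le hY₀).2 hY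
  have hY₉ : 9 ≤ Y := nine_le_of_eight_le_log hY₀ hL
  have hYV : Y ≤ V := by nlinarith [Real.pi_gt_three]
  have hV₈ : V ≤ 8 * Y := by nlinarith [Real.pi_lt_four]
  have habs : |V| = V := abs_of_nonneg (by linarith)
  rw [← hV]
  obtain ⟨hc, hc₁⟩ := one_add_one_div_log_mem_Ioc (by linarith) hYV
  have _ : 0 < 1 / Real.log Y := by positivity
  have hα₈ : 1 / Real.log Y ≤ 1 / 8 := one_div_le_one_div_of_le (by norm_num) hL
  have hshift := norm_perronIntegral_sub_Mterm_le (n := n) hRH hC hA hY₀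
    (a := 1 / 2 + 1 / Real.log Y) (by linarith) (by linarith) hc (V := V) (by linarith)
  have hleft := hvertical Y hY₀ hL V (by linarith) hV₈
  have htop := hhorizontal Y hY₀ hL _ V hc hc₁ (by rwa [habs]) (by rwa [habs])
  have hbottom := hhorizontal Y hY₀ hL _ (-V) hc hc₁ (by rwa [abs_neg, habs])
    (by rwa [abs_neg, habs])
  rw [mul_assoc]
  linarith
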